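/- arXiv:math/0606007 — 3 statements merged into one kernel-verified Lean document; each statement's English description precedes it below -/
import Mathlib

section
/- (Schur's comparison theorem) Let γ̄ : [0,L] → ℝ² be an injective arc parametrized by arclength such that the union of the image of γ̄ with the straight segment from γ̄(L) to γ̄(0) is the frontier of a compact convex subset of ℝ² (i.e. joining the endpoints of γ̄ results in a convex simple closed curve). Let γ : [0,L] → ℝ^d be an arc parametrized by arclength such that γ̄ has nowhere less curvature than γ, meaning TC(γ̄|[a,b]) ≥ TC(γ|[a,b]) for every subinterval [a,b] ⊆ [0,L]. Then the endpoints of γ are at least as far apart as those of γ̄: ‖γ(L) − γ(0)‖ ≥ ‖γ̄(L) − γ̄(0)‖. -/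
open Set Filter MeasureTheory
open scoped ENNReal NNReal RealInnerProductSpace

noncomputable section

/-- The parameters `u 0 < u 1 < ⋯ < u m` of a polygon inscribed in (the restriction to
`[a,b]` of) a curve: strictly increasing parameters lying in `[a,b]`. -/
def InscribedIn (a b : ℝ) (m : ℕ) (u : ℕ → ℝ) : Prop :=
  (∀ i < m, u i < u (i + 1)) ∧ ∀ i ≤ m, u i ∈ Set.Icc a b

/-- The length of the polygon inscribed in the curve `γ` with parameters `u 0, …, u m`:
the sum of the euclidean lengths of its edges. -/
def polyLen {E : Type*} [NormedAddCommGroup E] (γ : ℝ → E) (m : ℕ) (u : ℕ → ℝ) : ℝ :=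
  ∑ i ∈ Finset.range m, ‖γ (u (i + 1)) - γ (u i)‖

/-- The (Jordan) length of the arc `γ : [a,b] → E`: the supremum of the lengths of all
inscribed polygons, valued in `[0,∞]`. -/
def arcLen {E : Type*} [NormedAddCommGroup E] (γ : ℝ → E) (a b : ℝ) : ℝ≥0∞ :=
  ⨆ (m : ℕ) (u : ℕ → ℝ) (_ : InscribedIn a b m u), ENNReal.ofReal (polyLen γ m u)

/-- The list of vertices of the polygon inscribed in `γ` with parameters `u 0, …, u m`. -/
def vertexList {E : Type*} (γ : ℝ → E) (m : ℕ) (u : ℕ → ℝ) : List E :=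
  (List.range (m + 1)).map fun i => γ (u i)

/-- Collapse consecutive equal entries of a list to single entries. -/
def collapse {E : Type*} (l : List E) : List E :=
  @List.destutter E (· ≠ ·) (Classical.decRel _) l

/-- The sum of the turning angles of a polygon given by its list of vertices: at each
interior vertex, the angle in `[0,π]` between the incoming and outgoing edge vectors. -/
def turnSum {E : Type*} [NormedAddCommGroup E] [InnerProductSpace ℝ E] : List E → ℝ
  | a :: b :: c :: l => InnerProductGeometry.angle (b - a) (c - b) + turnSum (b :: c :: l)
  | _ => 0

/-- The sum, at each interior vertex, of the euclidean distance `‖u₊ - u₋‖` between the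
unit tangent vectors of the incoming and outgoing edges (so a corner of turning angle θ
contributes `2 sin(θ/2)`). -/
def starSum {E : Type*} [NormedAddCommGroup E] [InnerProductSpace ℝ E] : List E → ℝ
  | a :: b :: c :: l =>
      ‖(‖c - b‖⁻¹ • (c - b)) - (‖b - a‖⁻¹ • (b - a))‖ + starSum (b :: c :: l)
  | _ => 0

/-- The total curvature of the polygon inscribed in `γ` with parameters `u 0, …, u m`:
after collapsing consecutive equal vertices, the sum of its turning angles. -/
def polyTC {E : Type*} [NormedAddCommGroup E] [InnerProductSpace ℝ E]
    (γ : ℝ → E) (m : ℕ) (u : ℕ → ℝ) : ℝ :=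
  turnSum (collapse (vertexList γ m u))

/-- The total curvature of the arc `γ : [a,b] → E`: the supremum over all inscribed
polygons of their total curvature, valued in `[0,∞]`. -/
def arcTC {E : Type*} [NormedAddCommGroup E] [InnerProductSpace ℝ E]
    (γ : ℝ → E) (a b : ℝ) : ℝ≥0∞ :=
  ⨆ (m : ℕ) (u : ℕ → ℝ) (_ : InscribedIn a b m u), ENNReal.ofReal (polyTC γ m u)

/-- The euclidean total curvature `TC*` of the polygon inscribed in `γ` with parameters
`u 0, …, u m`. -/
def polyTCStar {E : Type*} [NormedAddCommGroup E] [InnerProductSpace ℝ E]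
    (γ : ℝ → E) (m : ℕ) (u : ℕ → ℝ) : ℝ :=
  starSum (collapse (vertexList γ m u))

/-- The euclidean total curvature `TC*` of the arc `γ : [a,b] → E`. -/
def arcTCStar {E : Type*} [NormedAddCommGroup E] [InnerProductSpace ℝ E]
    (γ : ℝ → E) (a b : ℝ) : ℝ≥0∞ :=
  ⨆ (m : ℕ) (u : ℕ → ℝ) (_ : InscribedIn a b m u), ENNReal.ofReal (polyTCStar γ m u)

/-- Cyclically ordered parameters `u 0 < ⋯ < u m` in `[0,1)` of a polygon inscribed in a
loop `γ : ℝ/ℤ → E`. -/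
def LoopInscribed (m : ℕ) (u : ℕ → ℝ) : Prop :=
  (∀ i < m, u i < u (i + 1)) ∧ ∀ i ≤ m, u i ∈ Set.Ico (0 : ℝ) 1

/-- The list of vertices of the polygon inscribed in the loop `γ` with parameters
`u 0, …, u m`. -/
def loopVertexList {E : Type*} (γ : AddCircle (1 : ℝ) → E) (m : ℕ) (u : ℕ → ℝ) : List E :=
  (List.range (m + 1)).map fun i => γ (u i : ℝ)

/-- The sum of the lengths of the successive edges of a list of points. -/
def lenList {E : Type*} [NormedAddCommGroup E] : List E → ℝ
  | a :: b :: l => ‖b - a‖ + lenList (b :: l)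
  | _ => 0

/-- The length of the closed polygon inscribed in the loop `γ` with parameters
`u 0, …, u m`: the sum of the edge lengths, indices taken cyclically. -/
def loopPolyLen {E : Type*} [NormedAddCommGroup E]
    (γ : AddCircle (1 : ℝ) → E) (m : ℕ) (u : ℕ → ℝ) : ℝ :=
  lenList (loopVertexList γ m u ++ (loopVertexList γ m u).take 1)

/-- The length of a loop `γ : ℝ/ℤ → E`: the supremum of the lengths of inscribed closed
polygons, valued in `[0,∞]`. -/
def loopLen {E : Type*} [NormedAddCommGroup E] (γ : AddCircle (1 : ℝ) → E) : ℝ≥0∞ :=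
  ⨆ (m : ℕ) (u : ℕ → ℝ) (_ : LoopInscribed m u), ENNReal.ofReal (loopPolyLen γ m u)

open Classical in
/-- Collapse consecutive equal vertices of a *cyclic* list of vertices: collapse
consecutive duplicates, also across the wrap-around. -/
def cyclicCollapse {E : Type*} (l : List E) : List E :=
  if 2 ≤ (collapse l).length ∧ (collapse l).getLast? = (collapse l).head? then
    (collapse l).dropLast
  else collapse l

/-- The total curvature of the closed polygon inscribed in the loop `γ` with parameters
`u 0, …, u m`: after cyclically collapsing consecutive equal vertices, the sum of the
turning angles at all of its vertices (every vertex of a closed polygon is interior). -/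
def loopPolyTC {E : Type*} [NormedAddCommGroup E] [InnerProductSpace ℝ E]
    (γ : AddCircle (1 : ℝ) → E) (m : ℕ) (u : ℕ → ℝ) : ℝ :=
  turnSum (cyclicCollapse (loopVertexList γ m u) ++
    (cyclicCollapse (loopVertexList γ m u)).take 2)

/-- The total curvature of a loop `γ : ℝ/ℤ → E`: the supremum over all inscribed closed
polygons of their total curvature, valued in `[0,∞]`. -/
def loopTC {E : Type*} [NormedAddCommGroup E] [InnerProductSpace ℝ E]
    (γ : AddCircle (1 : ℝ) → E) : ℝ≥0∞ :=
  ⨆ (m : ℕ) (u : ℕ → ℝ) (_ : LoopInscribed m u), ENNReal.ofReal (loopPolyTC γ m u)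

/-- The euclidean total curvature `TC*` of the closed inscribed polygon. -/
def loopPolyTCStar {E : Type*} [NormedAddCommGroup E] [InnerProductSpace ℝ E]
    (γ : AddCircle (1 : ℝ) → E) (m : ℕ) (u : ℕ → ℝ) : ℝ :=
  starSum (cyclicCollapse (loopVertexList γ m u) ++
    (cyclicCollapse (loopVertexList γ m u)).take 2)

/-- The euclidean total curvature `TC*` of a loop `γ : ℝ/ℤ → E`. -/
def loopTCStar {E : Type*} [NormedAddCommGroup E] [InnerProductSpace ℝ E]
    (γ : AddCircle (1 : ℝ) → E) : ℝ≥0∞ :=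
  ⨆ (m : ℕ) (u : ℕ → ℝ) (_ : LoopInscribed m u), ENNReal.ofReal (loopPolyTCStar γ m u)

end

/-!
Measure heights over the chord of the convex arc `p` and let `t₀` be a lowest time: the height
decreases before `t₀` and increases afterwards. Measuring the direction of an inscribed edge against
the chord, negatively while the arc descends and positively while it rises, turning angles of
inscribed polygons are bounded by differences of edge directions. So the total curvature of `p`
between two times is at most the difference of its tangent angles there.

For times `s < t₀ < t` the velocities of `γ` therefore enclose an angle of at most the sum of the
angles that the velocities of `p` make with the chord, and some vector `T` of norm at most one is
at least as close to both velocities of `γ` as the chord is to those of `p`. Moving away from `t₀`,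
the angle to the chord grows by the total curvature of `p`, which dominates that of `γ`. Hence
`⟪T, γ'⟫ ≥ ⟪e, p'⟫` almost everywhere outside `[s, t]`, where `e` is the unit vector of the chord.
Integrating and letting `s, t → t₀` gives the comparison. The times straddle `t₀` because
neither curve need be differentiable there.
-/

open InnerProductGeometry Topology

section Polygons

variable {E : Type*} [NormedAddCommGroup E] [InnerProductSpace ℝ E]

theorem InscribedIn.monotoneOn {a b : ℝ} {m : ℕ} {u : ℕ → ℝ} (hu : InscribedIn a b m u) :
    MonotoneOn u (Iic m) := by
  intro i _ j hj hij
  induction j, hij using Nat.le_induction with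
  | base => exact le_rfl
  | succ k _ ih => exact (ih (Nat.le_of_succ_le hj)).trans (hu.1 k hj).le

theorem vertexList_zero {V : Type*} (γ : ℝ → V) (u : ℕ → ℝ) :
    vertexList γ 0 u = [γ (u 0)] := by
  simp only [vertexList, zero_add, List.range_one, List.map_cons, List.map_nil]

theorem vertexList_succ {V : Type*} (γ : ℝ → V) (m : ℕ) (u : ℕ → ℝ) :
    vertexList γ (m + 1) u = γ (u 0) :: vertexList γ m fun i => u (i + 1) := by
  simp only [vertexList, List.range_succ_eq_map (n := m + 1), List.map_cons, List.map_map,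
    Function.comp_def, Nat.succ_eq_add_one]

theorem turnSum_vertexList (γ : ℝ → E) (m : ℕ) (u : ℕ → ℝ) :
    turnSum (vertexList γ (m + 1) u) = ∑ i ∈ Finset.range m,
      angle (γ (u (i + 1)) - γ (u i)) (γ (u (i + 2)) - γ (u (i + 1))) := by
  induction m generalizing u with
  | zero => simp only [vertexList_succ, vertexList_zero, turnSum, Finset.range_zero,
      Finset.sum_empty]
  | succ m ih =>
    rw [Finset.sum_range_succ', ← ih fun i => u (i + 1), add_comm (turnSum _)]
    cases m <;> simp only [vertexList_succ, vertexList_zero, turnSum, zero_add, Nat.reduceAdd]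

theorem collapse_vertexList_of_injOn {V : Type*} {γ : ℝ → V} {a b : ℝ}
    (hγ : InjOn γ (Icc a b)) {m : ℕ} {u : ℕ → ℝ} (hu : InscribedIn a b m u) :
    collapse (vertexList γ m u) = vertexList γ m u := by
  refine @List.destutter_of_isChain _ _ (Classical.decRel _) _ ?_
  rw [List.isChain_iff_getElem]
  intro i hi heq
  simp only [vertexList, List.length_map, List.length_range] at hi
  simp only [vertexList, List.getElem_map, List.getElem_range] at heq
  exact (hu.1 i (by omega)).ne (hγ (hu.2 i (by omega)) (hu.2 (i + 1) (by omega)) heq)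

theorem angle_le_turnSum_collapse {A B C D : E} (hAB : A ≠ B) (hCD : C ≠ D) :
    angle (B - A) (D - C) ≤ turnSum (collapse [A, B, C, D]) := by
  unfold collapse
  by_cases hBC : B = C
  · subst hBC
    simp [List.destutter, List.destutter', hAB, hCD, turnSum]
  · simpa [List.destutter, List.destutter', hAB, hBC, hCD, turnSum] using
      angle_le_angle_add_angle (B - A) (C - B) (D - C)

theorem ofReal_polyTC_le_arcTC {γ : ℝ → E} {a b : ℝ} {m : ℕ} {u : ℕ → ℝ}
    (hu : InscribedIn a b m u) : ENNReal.ofReal (polyTC γ m u) ≤ arcTC γ a b :=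
  le_iSup_of_le m (le_iSup_of_le u (le_iSup_of_le hu le_rfl))

theorem ofReal_angle_le_arcTC {γ : ℝ → E} {a b c d : ℝ} (hab : a < b) (hbc : b < c) (hcd : c < d)
    (hγab : γ a ≠ γ b) (hγcd : γ c ≠ γ d) :
    ENNReal.ofReal (angle (γ b - γ a) (γ d - γ c)) ≤ arcTC γ a d := by
  let u : ℕ → ℝ := fun i => [a, b, c, d].getD i 0
  have hu : InscribedIn a d 3 u := by
    refine ⟨fun i hi => ?_, fun i hi => ?_⟩
    · interval_cases i <;> assumption
    · interval_cases i <;> constructor <;> simp only [u, List.getD_cons_zero,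
        List.getD_cons_succ] <;> linarith
  have hvert : vertexList γ 3 u = [γ a, γ b, γ c, γ d] := by
    simp only [vertexList_succ, vertexList_zero]
    rfl
  refine le_trans (ENNReal.ofReal_le_ofReal ?_) (ofReal_polyTC_le_arcTC hu)
  rw [polyTC, hvert]
  exact angle_le_turnSum_collapse hγab hγcd

end Polygons

section Tangents

variable {E : Type*} [NormedAddCommGroup E] [InnerProductSpace ℝ E] {γ : ℝ → E} {s t : ℝ}

theorem tendsto_slope_right {v : E} (h : HasDerivAt γ v s) :
    Tendsto (fun δ => δ⁻¹ • (γ (s + δ) - γ s)) (𝓝[>] 0) (𝓝 v) :=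
  (hasDerivAt_iff_tendsto_slope_zero.1 h).mono_left (nhdsGT_le_nhdsNE 0)

theorem tendsto_slope_left {v : E} (h : HasDerivAt γ v s) :
    Tendsto (fun δ => δ⁻¹ • (γ s - γ (s - δ))) (𝓝[>] 0) (𝓝 v) := by
  have hneg : Tendsto Neg.neg (𝓝[>] (0 : ℝ)) (𝓝[≠] 0) := by
    have := (tendsto_neg_nhdsGT_neg (a := (0 : ℝ))).mono_right (nhdsLT_le_nhdsNE 0)
    rwa [neg_zero] at this
  refine ((hasDerivAt_iff_tendsto_slope_zero.1 h).comp hneg).congr fun δ => ?_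
  rw [Function.comp_apply, inv_neg, neg_smul, ← smul_neg, neg_sub, ← sub_eq_add_neg]

theorem tendsto_angle_of_tendsto_inv_smul {e v : E} (he : e ≠ 0) (hv : v ≠ 0) {f : ℝ → E}
    (h : Tendsto (fun δ => δ⁻¹ • f δ) (𝓝[>] 0) (𝓝 v)) :
    Tendsto (fun δ => angle e (f δ)) (𝓝[>] 0) (𝓝 (angle e v)) := by
  refine Tendsto.congr' ?_ ((continuousAt_angle (x := (e, v)) he hv).tendsto.comp
    (tendsto_const_nhds.prodMk_nhds h))
  filter_upwards [self_mem_nhdsWithin] with δ hδ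
  exact angle_smul_right_of_pos _ _ (inv_pos.2 hδ)

theorem ofReal_angle_deriv_le_arcTC {v w : E} (hst : s < t) (hv : v ≠ 0) (hw : w ≠ 0)
    (hs : HasDerivAt γ v s) (ht : HasDerivAt γ w t) :
    ENNReal.ofReal (angle v w) ≤ arcTC γ s t := by
  have hright := tendsto_slope_right hs
  have hleft := tendsto_slope_left ht
  refine le_of_tendsto (ENNReal.tendsto_ofReal <|
    (continuousAt_angle (x := (v, w)) hv hw).tendsto.comp (hright.prodMk_nhds hleft)) ?_
  filter_upwards [hright.eventually_ne hv, hleft.eventually_ne hw,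
    Ioo_mem_nhdsGT (show 0 < (t - s) / 2 by linarith)] with δ hδs hδt ⟨hδ₀, hδ⟩
  rw [Function.comp_apply, angle_smul_right_of_pos _ _ (inv_pos.2 hδ₀),
    angle_smul_left_of_pos _ _ (inv_pos.2 hδ₀)]
  refine ofReal_angle_le_arcTC (by linarith) (by linarith) (by linarith)
    (fun heq => hδs ?_) fun heq => hδt ?_
  · rw [heq, sub_self, smul_zero]
  · rw [heq, sub_self, smul_zero]

end Tangents

section Arclength

variable {E : Type*} [NormedAddCommGroup E] {γ : ℝ → E} {a b L : ℝ}

/-- The curve `γ` is parametrized by arclength on `[0, L]`. -/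
def IsArclengthParam (γ : ℝ → E) (L : ℝ) : Prop :=
  ∀ a b : ℝ, 0 ≤ a → a ≤ b → b ≤ L → arcLen γ a b = ENNReal.ofReal (b - a)

theorem ofReal_norm_sub_le_arcLen (hab : a < b) :
    ENNReal.ofReal ‖γ b - γ a‖ ≤ arcLen γ a b := by
  let u : ℕ → ℝ := fun i => [a, b].getD i 0
  have hu : InscribedIn a b 1 u := by
    refine ⟨fun i hi => ?_, fun i hi => ?_⟩
    · interval_cases i; exact hab
    · interval_cases i
      exacts [left_mem_Icc.2 hab.le, right_mem_Icc.2 hab.le]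
  have hlen : polyLen γ 1 u = ‖γ b - γ a‖ := Finset.sum_range_one _
  exact hlen ▸ le_iSup_of_le 1 (le_iSup_of_le u (le_iSup_of_le hu le_rfl))

theorem IsArclengthParam.norm_sub_le (hγ : IsArclengthParam γ L) {s t : ℝ} (hs : s ∈ Icc 0 L)
    (ht : t ∈ Icc 0 L) (hst : s ≤ t) : ‖γ t - γ s‖ ≤ t - s := by
  rcases hst.eq_or_lt with rfl | hst
  · rw [sub_self, sub_self, norm_zero]
  have hlen := ofReal_norm_sub_le_arcLen (γ := γ) hst
  rw [hγ s t hs.1 hst.le ht.2] at hlen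
  exact (ENNReal.ofReal_le_ofReal_iff (sub_pos.2 hst).le).1 hlen

theorem IsArclengthParam.lipschitzOnWith (hγ : IsArclengthParam γ L) :
    LipschitzOnWith 1 γ (Icc 0 L) := by
  refine LipschitzOnWith.of_dist_le_mul fun s hs t ht => ?_
  rw [NNReal.coe_one, one_mul]
  wlog hst : s ≤ t generalizing s t
  · rw [dist_comm, dist_comm s]
    exact this t ht s hs (le_of_not_ge hst)
  rw [dist_comm, dist_comm s, dist_eq_norm, Real.dist_eq, abs_of_nonneg (sub_nonneg.2 hst)]
  exact hγ.norm_sub_le hs ht hst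

theorem ae_restrict_Ioc_of_Ioo {P : ℝ → Prop} (h : ∀ᵐ t : ℝ, t ∈ Ioo a b → P t) :
    ∀ᵐ t ∂volume.restrict (Ioc a b), P t := by
  rwa [← restrict_Ioo_eq_restrict_Ioc, ae_restrict_iff' measurableSet_Ioo]

theorem sub_le_sub_of_ae_deriv_le {f g : ℝ → ℝ} (hab : a ≤ b)
    (hf : AbsolutelyContinuousOnInterval f a b) (hg : AbsolutelyContinuousOnInterval g a b)
    (hfg : ∀ᵐ t : ℝ, t ∈ Ioo a b → deriv f t ≤ deriv g t) : f b - f a ≤ g b - g a := by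
  rw [← hf.integral_deriv_eq_sub, ← hg.integral_deriv_eq_sub]
  refine intervalIntegral.integral_mono_ae_restrict hab hf.intervalIntegrable_deriv
    hg.intervalIntegrable_deriv ?_
  rw [← restrict_Ioc_eq_restrict_Icc]
  exact ae_restrict_Ioc_of_Ioo hfg

theorem norm_deriv_le_of_mem_Ioo [NormedSpace ℝ E] {K : ℝ≥0} (hγ : LipschitzOnWith K γ (Icc a b))
    {t : ℝ} (ht : t ∈ Ioo a b) : ‖deriv γ t‖ ≤ K :=
  norm_deriv_le_of_lipschitzOn (Icc_mem_nhds ht.1 ht.2) hγ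

theorem ae_differentiableAt_of_lipschitzOnWith [NormedSpace ℝ E] [FiniteDimensional ℝ E] {K : ℝ≥0}
    (hγ : LipschitzOnWith K γ (Icc a b)) : ∀ᵐ t : ℝ, t ∈ Ioo a b → DifferentiableAt ℝ γ t := by
  filter_upwards [hγ.ae_differentiableWithinAt_of_mem (μ := volume)] with t hdiff ht
  exact (hdiff (Ioo_subset_Icc_self ht)).differentiableAt (Icc_mem_nhds ht.1 ht.2)

theorem intervalIntegrable_norm_deriv [NormedSpace ℝ E] [FiniteDimensional ℝ E] {K : ℝ≥0}
    (hab : a ≤ b) (hγ : LipschitzOnWith K γ (Icc a b)) :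
    IntervalIntegrable (fun t => ‖deriv γ t‖) volume a b := by
  rw [intervalIntegrable_iff_integrableOn_Ioc_of_le hab]
  refine Measure.integrableOn_of_bounded (M := K) measure_Ioc_lt_top.ne
    (stronglyMeasurable_deriv γ).norm.aestronglyMeasurable
    (ae_restrict_Ioc_of_Ioo (Eventually.of_forall fun t ht => ?_))
  rw [norm_norm]
  exact norm_deriv_le_of_mem_Ioo hγ ht

end Arclength

section UnitSpeed

variable {E : Type*} [NormedAddCommGroup E] [InnerProductSpace ℝ E] {γ : ℝ → E} {a b L : ℝ}

theorem inner_le_of_norm_le_one {v w : E} {r : ℝ} (hv : ‖v‖ ≤ 1) (hw : ‖w‖ ≤ r) : ⟪v, w⟫ ≤ r :=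
  (real_inner_le_norm v w).trans ((mul_le_of_le_one_left (norm_nonneg w) hv).trans hw)

theorem inner_inv_norm_smul_eq_cos_angle {e v : E} (hv : ‖v‖ = 1) :
    ⟪‖e‖⁻¹ • e, v⟫ = Real.cos (angle e v) := by
  rw [real_inner_smul_left, cos_angle, hv, mul_one, inv_mul_eq_div]

theorem norm_inv_norm_smul_le_one (e : E) : ‖‖e‖⁻¹ • e‖ ≤ 1 := by
  rw [norm_smul, norm_inv, norm_norm]
  exact inv_mul_le_one

theorem inner_inv_norm_smul_self (e : E) : ⟪‖e‖⁻¹ • e, e⟫ = ‖e‖ := by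
  rw [real_inner_smul_left, real_inner_self_eq_norm_mul_norm, ← mul_assoc, inv_mul_mul_self]

theorem absolutelyContinuousOnInterval_inner {K : ℝ≥0} (hab : a ≤ b)
    (hγ : LipschitzOnWith K γ (Icc a b)) (w : E) :
    AbsolutelyContinuousOnInterval (fun t => ⟪w, γ t⟫) a b := by
  rw [← uIcc_of_le hab] at hγ
  exact ((innerSL ℝ w).lipschitz.comp_lipschitzOnWith hγ).absolutelyContinuousOnInterval

theorem deriv_inner_const_left {t : ℝ} (w : E) (h : DifferentiableAt ℝ γ t) :
    deriv (fun t => ⟪w, γ t⟫) t = ⟪w, deriv γ t⟫ :=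
  ((innerSL ℝ w).hasFDerivAt.comp_hasDerivAt t h.hasDerivAt).deriv

variable [FiniteDimensional ℝ E]

theorem inner_sub_le_inner_sub_of_ae_inner_deriv_le {F : Type*} [NormedAddCommGroup F]
    [InnerProductSpace ℝ F] [FiniteDimensional ℝ F] {p : ℝ → F} {K K' : ℝ≥0} (hab : a ≤ b)
    (hp : LipschitzOnWith K p (Icc a b)) (hγ : LipschitzOnWith K' γ (Icc a b)) {e : F} {T : E}
    (h : ∀ᵐ t : ℝ, t ∈ Ioo a b → ⟪e, deriv p t⟫ ≤ ⟪T, deriv γ t⟫) :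
    ⟪e, p b - p a⟫ ≤ ⟪T, γ b - γ a⟫ := by
  rw [inner_sub_right, inner_sub_right]
  refine sub_le_sub_of_ae_deriv_le hab (absolutelyContinuousOnInterval_inner hab hp e)
    (absolutelyContinuousOnInterval_inner hab hγ T) ?_
  filter_upwards [h, ae_differentiableAt_of_lipschitzOnWith hp,
    ae_differentiableAt_of_lipschitzOnWith hγ] with t hle hpt hγt ht
  rw [deriv_inner_const_left e (hpt ht), deriv_inner_const_left T (hγt ht)]
  exact hle ht

theorem norm_sub_le_integral_norm_deriv {K : ℝ≥0} (hab : a ≤ b)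
    (hγ : LipschitzOnWith K γ (Icc a b)) : ‖γ b - γ a‖ ≤ ∫ t in a..b, ‖deriv γ t‖ := by
  set w : E := ‖γ b - γ a‖⁻¹ • (γ b - γ a)
  have hinner : ⟪w, γ b⟫ - ⟪w, γ a⟫ = ‖γ b - γ a‖ := by
    rw [← inner_sub_right, inner_inv_norm_smul_self]
  have hac := absolutelyContinuousOnInterval_inner hab hγ w
  rw [← hinner, ← hac.integral_deriv_eq_sub]
  refine intervalIntegral.integral_mono_ae_restrict hab hac.intervalIntegrable_deriv
    (intervalIntegrable_norm_deriv hab hγ) ?_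
  rw [← restrict_Ioc_eq_restrict_Icc]
  refine ae_restrict_Ioc_of_Ioo ?_
  filter_upwards [ae_differentiableAt_of_lipschitzOnWith hγ] with t hdiff ht
  rw [deriv_inner_const_left w (hdiff ht)]
  exact inner_le_of_norm_le_one (norm_inv_norm_smul_le_one _) le_rfl

theorem polyLen_le_integral_norm_deriv {K : ℝ≥0} (hγ : LipschitzOnWith K γ (Icc a b))
    {m : ℕ} {u : ℕ → ℝ} (hu : InscribedIn a b m u) :
    polyLen γ m u ≤ ∫ t in a..b, ‖deriv γ t‖ := by
  have hedge (i : ℕ) (hi : i < m) : LipschitzOnWith K γ (Icc (u i) (u (i + 1))) :=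
    hγ.mono (Icc_subset_Icc (hu.2 i hi.le).1 (hu.2 (i + 1) hi).2)
  have hab : a ≤ b := (hu.2 0 m.zero_le).1.trans (hu.2 0 m.zero_le).2
  calc polyLen γ m u
      ≤ ∑ i ∈ Finset.range m, ∫ t in u i..u (i + 1), ‖deriv γ t‖ :=
        Finset.sum_le_sum fun i hi => norm_sub_le_integral_norm_deriv
          (hu.1 i (Finset.mem_range.1 hi)).le (hedge i (Finset.mem_range.1 hi))
    _ = ∫ t in u 0..u m, ‖deriv γ t‖ :=
        intervalIntegral.sum_integral_adjacent_intervals fun i hi =>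
          intervalIntegrable_norm_deriv (hu.1 i hi).le (hedge i hi)
    _ ≤ ∫ t in a..b, ‖deriv γ t‖ :=
        intervalIntegral.integral_mono_interval (hu.2 0 m.zero_le).1
          (hu.monotoneOn (mem_Iic.2 m.zero_le) self_mem_Iic m.zero_le) (hu.2 m le_rfl).2
          (Eventually.of_forall fun t => norm_nonneg _) (intervalIntegrable_norm_deriv hab hγ)

theorem IsArclengthParam.ae_norm_deriv_eq_one (hγ : IsArclengthParam γ L) :
    ∀ᵐ t : ℝ, t ∈ Ioo 0 L → ‖deriv γ t‖ = 1 := by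
  rcases lt_or_ge L 0 with hL | hL
  · exact Eventually.of_forall fun t ht => absurd (ht.1.trans ht.2) hL.not_gt
  have hlip := hγ.lipschitzOnWith
  have hint := intervalIntegrable_norm_deriv hL hlip
  have hlen : L ≤ ∫ t in (0 : ℝ)..L, ‖deriv γ t‖ := by
    refine (ENNReal.ofReal_le_ofReal_iff (intervalIntegral.integral_nonneg hL
      fun t _ => norm_nonneg _)).1 ?_
    rw [← sub_zero L, ← hγ 0 L le_rfl hL le_rfl, sub_zero]
    exact iSup_le fun m => iSup_le fun u => iSup_le fun hu =>
      ENNReal.ofReal_le_ofReal (polyLen_le_integral_norm_deriv hlip hu)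
  have hle : ∀ᵐ t ∂volume.restrict (Ioc 0 L), ‖deriv γ t‖ ≤ 1 :=
    ae_restrict_Ioc_of_Ioo (Eventually.of_forall fun t ht => norm_deriv_le_of_mem_Ioo hlip ht)
  have hinteq : ∫ t in Ioc 0 L, ‖deriv γ t‖ = ∫ t in Ioc 0 L, 1 := by
    refine le_antisymm (integral_mono_ae hint.1 (integrable_const 1) hle) ?_
    rwa [← intervalIntegral.integral_of_le hL, ← intervalIntegral.integral_of_le hL,
      intervalIntegral.integral_const, smul_eq_mul, mul_one, sub_zero]
  have hae := (integral_eq_iff_of_ae_le hint.1 (integrable_const 1) hle).1 hinteq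
  filter_upwards [(ae_restrict_iff' measurableSet_Ioc).1 hae] with t ht hmem
  exact ht (Ioo_subset_Ioc_self hmem)

end UnitSpeed

section ComparisonVector

variable {E : Type*} [NormedAddCommGroup E] [InnerProductSpace ℝ E] {T u w x : E} {α β η : ℝ}

theorem cos_add_angle_le_inner (hT : ‖T‖ ≤ 1) (hu : ‖u‖ = 1) (hx : ‖x‖ = 1) :
    Real.cos (Real.arccos ⟪T, u⟫ + angle u x) ≤ ⟪T, x⟫ := by
  have hTu : |⟪T, u⟫| ≤ 1 := (abs_real_inner_le_norm T u).trans (by rwa [hu, mul_one])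
  have hux := inner_eq_cos_angle_of_norm_eq_one hu hx
  have hTperp : ‖T - ⟪T, u⟫ • u‖ ≤ √(1 - ⟪T, u⟫ ^ 2) := by
    refine Real.le_sqrt_of_sq_le ?_
    rw [norm_sub_sq_real, norm_smul, real_inner_smul_right, hu, Real.norm_eq_abs, mul_one, sq_abs]
    nlinarith [norm_nonneg T]
  have hxperp : ‖x - ⟪u, x⟫ • u‖ ≤ Real.sin (angle u x) := by
    refine abs_le_of_sq_le_sq' ?_ (sin_angle_nonneg u x) |>.2
    rw [norm_sub_sq_real, norm_smul, real_inner_smul_right, real_inner_comm u x, hu, hx,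
      Real.norm_eq_abs, mul_one, sq_abs, Real.sin_sq, ← hux]
    exact le_of_eq (by ring)
  have hperp := neg_le_of_abs_le (abs_real_inner_le_norm (T - ⟪T, u⟫ • u) (x - ⟪u, x⟫ • u))
  have hbound := mul_le_mul hTperp hxperp (norm_nonneg _) (Real.sqrt_nonneg _)
  have hdecomp : ⟪T, x⟫ = ⟪T, u⟫ * ⟪u, x⟫ + ⟪T - ⟪T, u⟫ • u, x - ⟪u, x⟫ • u⟫ := by
    simp only [inner_sub_left, inner_sub_right, real_inner_smul_left, real_inner_smul_right,
      real_inner_self_eq_norm_sq, hu]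
    ring
  rw [Real.cos_add, Real.cos_arccos (abs_le.1 hTu).1 (abs_le.1 hTu).2, Real.sin_arccos, ← hux]
  linarith

theorem cos_add_le_inner (hT : ‖T‖ ≤ 1) (hu : ‖u‖ = 1) (hx : ‖x‖ = 1)
    (hα : 0 ≤ α) (hTu : Real.cos α ≤ ⟪T, u⟫) (hux : angle u x ≤ η) (hη : α + η ≤ Real.pi) :
    Real.cos (α + η) ≤ ⟪T, x⟫ := by
  have harccos : Real.arccos ⟪T, u⟫ ≤ α := by
    rw [← Real.arccos_cos hα (by linarith [angle_nonneg u x])]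
    exact Real.arccos_le_arccos hTu
  exact (Real.cos_le_cos_of_nonneg_of_le_pi
    (add_nonneg (Real.arccos_nonneg _) (angle_nonneg u x)) hη (add_le_add harccos hux)).trans
    (cos_add_angle_le_inner hT hu hx)

theorem exists_inner_eq_cos_and_inner_eq_cos_sub (hu : ‖u‖ = 1) (hw : ‖w‖ = 1)
    (huw₀ : angle u w ≠ 0) (huw : angle u w ≠ Real.pi) (α : ℝ) :
    ∃ T : E, ‖T‖ = 1 ∧ ⟪T, u⟫ = Real.cos α ∧ ⟪T, w⟫ = Real.cos (angle u w - α) := by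
  have hinner := inner_eq_cos_angle_of_norm_eq_one hu hw
  have hsin : Real.sin (angle u w) ≠ 0 := fun h =>
    (sin_eq_zero_iff_angle_eq_zero_or_angle_eq_pi.1 h).elim huw₀ huw
  set δ := angle u w
  let T : E := (Real.sin δ)⁻¹ • (Real.sin (δ - α) • u + Real.sin α • w)
  have hTu : ⟪T, u⟫ = Real.cos α := by
    simp only [T, real_inner_smul_left, inner_add_left, real_inner_self_eq_norm_sq, hu,
      real_inner_comm u w, hinner]
    rw [inv_mul_eq_iff_eq_mul₀ hsin, Real.sin_sub]
    ring
  have hTw : ⟪T, w⟫ = Real.cos (δ - α) := by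
    simp only [T, real_inner_smul_left, inner_add_left, real_inner_self_eq_norm_sq, hw, hinner]
    rw [inv_mul_eq_iff_eq_mul₀ hsin, Real.sin_sub, Real.cos_sub]
    linear_combination (-Real.sin α) * Real.sin_sq_add_cos_sq δ
  refine ⟨T, ?_, hTu, hTw⟩
  rw [← sq_eq_sq₀ (norm_nonneg T) zero_le_one, one_pow, ← real_inner_self_eq_norm_sq]
  conv_lhs => arg 2; simp only [T]
  rw [real_inner_smul_right, inner_add_right, real_inner_smul_right, real_inner_smul_right, hTu,
    hTw, inv_mul_eq_iff_eq_mul₀ hsin, mul_one, mul_comm (Real.sin α), ← Real.sin_add,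
    sub_add_cancel]

theorem exists_cos_le_inner_and_cos_le_inner (hu : ‖u‖ = 1) (hw : ‖w‖ = 1)
    (hα : 0 ≤ α) (hα' : α ≤ Real.pi) (hβ : β ≤ Real.pi) (huw : angle u w ≤ α + β) :
    ∃ T : E, ‖T‖ ≤ 1 ∧ Real.cos α ≤ ⟪T, u⟫ ∧ Real.cos β ≤ ⟪T, w⟫ := by
  rcases le_or_gt (angle u w) α with hle | hlt
  · refine ⟨w, hw.le, ?_, ?_⟩
    · rw [real_inner_comm, inner_eq_cos_angle_of_norm_eq_one hu hw]
      exact Real.cos_le_cos_of_nonneg_of_le_pi (angle_nonneg u w) hα' hle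
    · rw [real_inner_self_eq_norm_sq, hw, one_pow]
      exact Real.cos_le_one β
  have hcos : Real.cos β ≤ Real.cos (angle u w - α) :=
    Real.cos_le_cos_of_nonneg_of_le_pi (by linarith) hβ (by linarith)
  rcases eq_or_ne (angle u w) Real.pi with hpi | hpi
  · refine ⟨Real.cos α • u, ?_, ?_, ?_⟩
    · rw [norm_smul, hu, mul_one]
      exact Real.abs_cos_le_one α
    · rw [real_inner_smul_left, real_inner_self_eq_norm_sq, hu, one_pow, mul_one]
    · rwa [real_inner_smul_left, inner_eq_cos_angle_of_norm_eq_one hu hw, hpi, Real.cos_pi,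
        mul_neg_one, ← Real.cos_pi_sub, ← hpi]
  · obtain ⟨T, hT, hTu, hTw⟩ :=
      exists_inner_eq_cos_and_inner_eq_cos_sub hu hw (hα.trans_lt hlt).ne' hpi α
    exact ⟨T, hT.le, hTu.ge, hcos.trans_eq hTw.symm⟩

end ComparisonVector

section OrientedPlane

variable {F : Type*} [NormedAddCommGroup F] [InnerProductSpace ℝ F]
  [Fact (Module.finrank ℝ F = 2)] (o : Orientation ℝ F (Fin 2)) {e v w : F}

theorem areaForm_eq_norm_mul_norm_mul_sin_angle (hv : 0 ≤ o.areaForm e v) :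
    o.areaForm e v = ‖e‖ * ‖v‖ * Real.sin (angle e v) := by
  rw [← sq_eq_sq₀ hv (mul_nonneg (by positivity) (sin_angle_nonneg e v)), mul_pow, Real.sin_sq,
    mul_sub, ← mul_pow _ (Real.cos _), mul_comm (‖e‖ * ‖v‖) (Real.cos _),
    cos_angle_mul_norm_mul_norm, mul_one, mul_pow, ← o.inner_sq_add_areaForm_sq,
    add_sub_cancel_left]

-- `hflip` excludes `v` opposite to `e` and `w` along `e`, where all three area forms vanish.
theorem angle_le_angle_of_areaForm_nonneg (he : e ≠ 0) (hv : v ≠ 0) (hw : w ≠ 0)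
    (hev : 0 ≤ o.areaForm e v) (hew : 0 ≤ o.areaForm e w) (hvw : 0 ≤ o.areaForm v w)
    (hflip : o.areaForm e v = 0 → o.areaForm e w = 0 → ⟪e, v⟫ < 0 → ⟪e, w⟫ ≤ 0) :
    angle e v ≤ angle e w := by
  have hpos : 0 < ‖e‖ ^ 2 * (‖v‖ * ‖w‖) := by positivity
  have hsin : 0 ≤ Real.sin (angle e w - angle e v) := by
    have h := o.inner_mul_areaForm_sub e v w
    rw [areaForm_eq_norm_mul_norm_mul_sin_angle o hev,
      areaForm_eq_norm_mul_norm_mul_sin_angle o hew, ← cos_angle_mul_norm_mul_norm e v,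
      ← cos_angle_mul_norm_mul_norm e w] at h
    refine nonneg_of_mul_nonneg_right (a := ‖e‖ ^ 2 * (‖v‖ * ‖w‖)) ?_ hpos
    rw [Real.sin_sub]
    linarith [mul_nonneg (sq_nonneg ‖e‖) hvw]
  by_contra! hlt
  have hle : -Real.pi ≤ angle e w - angle e v := by
    linarith [angle_nonneg e w, angle_le_pi e v]
  rcases hle.eq_or_lt with heq | hgt
  · have hangle_v : angle e v = Real.pi := by linarith [angle_nonneg e w, angle_le_pi e v]
    have hangle_w : angle e w = 0 := by linarith [angle_nonneg e w, angle_le_pi e v]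
    have hinner := hflip
      (by rw [areaForm_eq_norm_mul_norm_mul_sin_angle o hev, hangle_v, Real.sin_pi, mul_zero])
      (by rw [areaForm_eq_norm_mul_norm_mul_sin_angle o hew, hangle_w, Real.sin_zero, mul_zero])
      ((inner_eq_neg_mul_norm_of_angle_eq_pi hangle_v).trans_lt
        (neg_neg_of_pos (by positivity)))
    rw [inner_eq_mul_norm_of_angle_eq_zero hangle_w] at hinner
    exact absurd hinner (by positivity : 0 < ‖e‖ * ‖w‖).not_ge
  · exact (Real.sin_neg_of_neg_of_neg_pi_lt (sub_neg.2 hlt) hgt).not_ge hsin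

theorem angle_eq_sub_of_areaForm_nonneg (he : e ≠ 0) (hv : v ≠ 0) (hw : w ≠ 0)
    (hev : 0 ≤ o.areaForm e v) (hew : 0 ≤ o.areaForm e w) (hvw : 0 ≤ o.areaForm v w)
    (hflip : o.areaForm e v = 0 → o.areaForm e w = 0 → ⟪e, v⟫ < 0 → ⟪e, w⟫ ≤ 0) :
    angle v w = angle e w - angle e v := by
  have hpos : 0 < ‖e‖ ^ 2 * (‖v‖ * ‖w‖) := by positivity
  have hle := angle_le_angle_of_areaForm_nonneg o he hv hw hev hew hvw hflip
  have hcos : Real.cos (angle v w) = Real.cos (angle e w - angle e v) := by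
    have h := o.inner_mul_inner_add_areaForm_mul_areaForm e v w
    rw [areaForm_eq_norm_mul_norm_mul_sin_angle o hev,
      areaForm_eq_norm_mul_norm_mul_sin_angle o hew, ← cos_angle_mul_norm_mul_norm e v,
      ← cos_angle_mul_norm_mul_norm e w, ← cos_angle_mul_norm_mul_norm v w] at h
    refine mul_left_cancel₀ hpos.ne' ?_
    rw [Real.cos_sub]
    linear_combination -h
  exact Real.injOn_cos ⟨angle_nonneg v w, angle_le_pi v w⟩
    ⟨sub_nonneg.2 hle, by linarith [angle_nonneg e v, angle_le_pi e w]⟩ hcos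

end OrientedPlane

section SignedArea

variable {F : Type*} [NormedAddCommGroup F] [InnerProductSpace ℝ F]
  [Fact (Module.finrank ℝ F = 2)] (o : Orientation ℝ F (Fin 2)) {x y z : F}

/-- Twice the signed area of the triangle `x y z`; it is positive when the triangle is traversed
counterclockwise with respect to `o`. -/
noncomputable def signedArea (x y z : F) : ℝ :=
  o.areaForm (y - x) (z - x)

theorem signedArea_eq_add (x y z : F) :
    signedArea o x y z = o.areaForm x y + o.areaForm y z + o.areaForm z x := by
  simp only [signedArea, map_sub, LinearMap.sub_apply, o.areaForm_apply_self, o.areaForm_swap x z,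
    o.areaForm_swap y x]
  ring

theorem signedArea_rotate (x y z : F) : signedArea o y z x = signedArea o x y z := by
  rw [signedArea_eq_add, signedArea_eq_add, add_comm, add_assoc]

theorem signedArea_neg_orientation (x y z : F) : signedArea (-o) x y z = -signedArea o x y z := by
  rw [signedArea, o.areaForm_neg_orientation, LinearMap.neg_apply, LinearMap.neg_apply, signedArea]

theorem signedArea_sub_right (x y z v : F) :
    signedArea o (x - v) (y - v) (z - v) = signedArea o x y z := by
  simp only [signedArea, sub_sub_sub_cancel_right]

theorem areaForm_smul_add_smul_add_smul_eq_zero (x y z : F) :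
    o.areaForm x y • z + o.areaForm y z • x + o.areaForm z x • y = 0 := by
  rcases eq_or_ne x 0 with rfl | hx
  · simp only [map_zero, LinearMap.zero_apply, zero_smul, smul_zero, add_zero]
  set v := o.areaForm x y • z + o.areaForm y z • x + o.areaForm z x • y
  have hinner : ⟪x, v⟫ = 0 := by
    simp only [v, inner_add_right, real_inner_smul_right, real_inner_self_eq_norm_sq]
    linear_combination o.areaForm_swap z x * ⟪x, y⟫ - o.inner_mul_areaForm_sub x y z
  have harea : o.areaForm x v = 0 := by
    simp only [v, map_add, map_smul, smul_eq_mul, o.areaForm_apply_self]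
    linear_combination o.areaForm x y * o.areaForm_swap x z
  have hnorm := o.inner_sq_add_areaForm_sq x v
  rw [hinner, harea, zero_pow two_ne_zero, add_zero, ← mul_pow] at hnorm
  exact norm_eq_zero.1 ((mul_eq_zero.1 (pow_eq_zero_iff two_ne_zero |>.1 hnorm.symm)).resolve_left
    (norm_ne_zero_iff.2 hx))

theorem continuousOn_areaForm {X : Type*} [TopologicalSpace X] {S : Set X} {f g : X → F}
    (hf : ContinuousOn f S) (hg : ContinuousOn g S) :
    ContinuousOn (fun t => o.areaForm (f t) (g t)) S := by
  simp only [← o.inner_rightAngleRotation_left]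
  exact (o.rightAngleRotation.continuous.comp_continuousOn hf).inner hg

theorem signedArea_ne_zero_of_norm_eq (hxy : x ≠ y) (hxz : x ≠ z) (hyz : y ≠ z)
    (hnxy : ‖x‖ = ‖y‖) (hnxz : ‖x‖ = ‖z‖) : signedArea o x y z ≠ 0 := by
  intro harea
  have hchord {v : F} (hv : ‖x‖ = ‖v‖) : 2 * ⟪v - x, x⟫ = -‖v - x‖ ^ 2 := by
    rw [norm_sub_sq_real, ← hv, inner_sub_left, real_inner_self_eq_norm_sq]
    ring
  have hinner {v w : F} (hv : ‖x‖ = ‖v‖) (hw : ‖x‖ = ‖w‖) (hxv : x ≠ v)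
      (hvw : o.areaForm (v - x) (w - x) = 0) : ⟪v - x, w - x⟫ = ‖w - x‖ ^ 2 := by
    have h := o.inner_mul_inner_add_areaForm_mul_areaForm (v - x) (w - x) x
    rw [hvw, zero_mul, add_zero] at h
    have hpos : ‖v - x‖ ^ 2 ≠ 0 := pow_ne_zero 2 (norm_ne_zero_iff.2 (sub_ne_zero.2 hxv.symm))
    refine mul_left_cancel₀ hpos ?_
    linear_combination (-2) * h + ⟪v - x, w - x⟫ * hchord hv - ‖v - x‖ ^ 2 * hchord hw
  have hyx := hinner hnxy hnxz hxy harea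
  have hzx := hinner hnxz hnxy hxz (by rw [o.areaForm_swap, ← signedArea, harea, neg_zero])
  rw [real_inner_comm] at hzx
  have hdist : ‖(y - x) - (z - x)‖ ^ 2 = 0 := by
    rw [norm_sub_sq_real, hyx, ← hzx, hyx]
    ring
  rw [sub_sub_sub_cancel_right, pow_eq_zero_iff two_ne_zero, norm_eq_zero, sub_eq_zero] at hdist
  exact hyz hdist

theorem signedArea_nonpos_of_areaForm_nonpos (hxy : ‖x‖ = ‖y‖) (hyz : ‖y‖ = ‖z‖)
    (hx : o.areaForm x y ≤ 0) (hz : o.areaForm y z ≤ 0) : signedArea o x y z ≤ 0 := by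
  rcases eq_or_ne y 0 with rfl | hy
  · rw [norm_zero, norm_eq_zero] at hxy
    rw [hxy, signedArea, sub_self, map_zero, LinearMap.zero_apply]
  have hpos : 0 < ‖y‖ ^ 2 := by positivity
  have hinner : ⟪x, y⟫ ≤ ‖y‖ ^ 2 ∧ ⟪y, z⟫ ≤ ‖y‖ ^ 2 := by
    constructor
    · simpa only [hxy, sq] using real_inner_le_norm x y
    · simpa only [hyz, sq] using real_inner_le_norm y z
  have hsplit : ‖y‖ ^ 2 * signedArea o x y z
      = o.areaForm x y * (‖y‖ ^ 2 - ⟪y, z⟫) + o.areaForm y z * (‖y‖ ^ 2 - ⟪x, y⟫) := by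
    rw [signedArea_eq_add, o.areaForm_swap z x, real_inner_comm y x]
    linear_combination o.inner_mul_areaForm_sub y x z + ⟪y, z⟫ * o.areaForm_swap x y
  refine nonpos_of_mul_nonpos_right (hsplit.trans_le (add_nonpos ?_ ?_)) hpos
  · exact mul_nonpos_of_nonpos_of_nonneg hx (sub_nonneg.2 hinner.2)
  · exact mul_nonpos_of_nonpos_of_nonneg hz (sub_nonneg.2 hinner.1)

theorem signedArea_nonneg_of_areaForm_neg {C : Set F} (hC : Convex ℝ C) (h0 : C ∈ 𝓝 0)
    (hx : gauge C x ≤ 1) (hy : gauge C y ≤ 1) (hz : 1 ≤ gauge C z)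
    (hxy : o.areaForm x y < 0) (hyz : 0 ≤ o.areaForm y z) (hzx : 0 ≤ o.areaForm z x) :
    0 ≤ signedArea o x y z := by
  have hcomb : -o.areaForm x y • z = o.areaForm y z • x + o.areaForm z x • y := by
    rw [neg_smul, neg_eq_iff_add_eq_zero, ← add_assoc]
    exact areaForm_smul_add_smul_add_smul_eq_zero o x y z
  have hgauge : -o.areaForm x y * gauge C z ≤ o.areaForm y z + o.areaForm z x :=
    calc -o.areaForm x y * gauge C z
        = gauge C (o.areaForm y z • x + o.areaForm z x • y) := by
          rw [← hcomb, ← smul_eq_mul, gauge_smul_of_nonneg (neg_pos.2 hxy).le]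
      _ ≤ gauge C (o.areaForm y z • x) + gauge C (o.areaForm z x • y) :=
          gauge_add_le hC (absorbent_nhds_zero h0) _ _
      _ ≤ o.areaForm y z + o.areaForm z x := by
          rw [gauge_smul_of_nonneg hyz, gauge_smul_of_nonneg hzx]
          exact add_le_add (mul_le_of_le_one_right hyz hx) (mul_le_of_le_one_right hzx hy)
  rw [signedArea_eq_add]
  linarith [le_mul_of_one_le_right (neg_pos.2 hxy).le hz]

theorem signedArea_nonneg_of_radial_pos {C : Set F} (hC : Convex ℝ C) (h0 : C ∈ 𝓝 0)
    (hx : gauge C x = 1) (hy : gauge C y = 1) (hz : gauge C z = 1)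
    (hpos : 0 < signedArea o (‖x‖⁻¹ • x) (‖y‖⁻¹ • y) (‖z‖⁻¹ • z)) : 0 ≤ signedArea o x y z := by
  have hnorm {v : F} (hv : gauge C v = 1) : ‖‖v‖⁻¹ • v‖ = 1 :=
    norm_smul_inv_norm (𝕜 := ℝ) fun h => by
      simp only [h, gauge_zero, zero_ne_one] at hv
  have harea {v w : F} (hvw : o.areaForm v w ≤ 0) :
      o.areaForm (‖v‖⁻¹ • v) (‖w‖⁻¹ • w) ≤ 0 := by
    simp only [map_smul, LinearMap.smul_apply, smul_eq_mul]
    exact mul_nonpos_of_nonneg_of_nonpos (by positivity)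
      (mul_nonpos_of_nonneg_of_nonpos (by positivity) hvw)
  by_contra! hneg
  wlog hxy : o.areaForm x y < 0 generalizing x y z
  · rcases lt_or_ge (o.areaForm y z) 0 with hyz | hyz
    · exact this hy hz hx (by rwa [signedArea_rotate]) (by rwa [signedArea_rotate]) hyz
    · refine this hz hx hy (by rwa [← signedArea_rotate]) (by rwa [← signedArea_rotate]) ?_
      rw [signedArea_eq_add] at hneg
      linarith
  rcases le_total (o.areaForm y z) 0 with hyz | hyz
  · exact hpos.not_ge (signedArea_nonpos_of_areaForm_nonpos o ((hnorm hx).trans (hnorm hy).symm)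
      ((hnorm hy).trans (hnorm hz).symm) (harea hxy.le) (harea hyz))
  rcases le_total (o.areaForm z x) 0 with hzx | hzx
  · rw [← signedArea_rotate, ← signedArea_rotate] at hpos
    exact hpos.not_ge (signedArea_nonpos_of_areaForm_nonpos o ((hnorm hz).trans (hnorm hx).symm)
      ((hnorm hx).trans (hnorm hy).symm) (harea hzx) (harea hxy.le))
  · exact hneg.not_ge
      (signedArea_nonneg_of_areaForm_neg o hC h0 hx.le hy.le hz.ge hxy hyz hzx)

end SignedArea

section ConvexArc

variable {F : Type*} [NormedAddCommGroup F] [InnerProductSpace ℝ F]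
  [Fact (Module.finrank ℝ F = 2)] {o : Orientation ℝ F (Fin 2)} {p : ℝ → F} {L : ℝ}

/-- The injective arc `p : [0, L] → F` turns counterclockwise with respect to `o`, in the global
sense that no triangle inscribed in it in order is traversed clockwise. -/
structure IsConvexArc (o : Orientation ℝ F (Fin 2)) (p : ℝ → F) (L : ℝ) : Prop where
  continuousOn : ContinuousOn p (Icc 0 L)
  injOn : InjOn p (Icc 0 L)
  signedArea_nonneg : ∀ ⦃a b c : ℝ⦄, 0 ≤ a → a < b → b < c → c ≤ L →
    0 ≤ signedArea o (p a) (p b) (p c)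

theorem forall_pos_or_forall_neg_of_ne_zero {X : Type*} [TopologicalSpace X] {S : Set X}
    (hS : IsPreconnected S) {f : X → ℝ} (hf : ContinuousOn f S) (hne : ∀ x ∈ S, f x ≠ 0) :
    (∀ x ∈ S, 0 < f x) ∨ ∀ x ∈ S, f x < 0 := by
  by_contra! h
  obtain ⟨⟨x, hx, hfx⟩, y, hy, hfy⟩ := h
  obtain ⟨z, hz, hfz⟩ := hS.intermediate_value hx hy hf ⟨hfx, hfy⟩
  exact hne z hz hfz

theorem signedArea_pos_or_neg_of_ne_zero (o : Orientation ℝ F (Fin 2)) {q : ℝ → F}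
    (hq : ContinuousOn q (Icc 0 L)) (hne : ∀ ⦃a b c : ℝ⦄, 0 ≤ a → a < b → b < c → c ≤ L →
      signedArea o (q a) (q b) (q c) ≠ 0) :
    (∀ ⦃a b c : ℝ⦄, 0 ≤ a → a < b → b < c → c ≤ L → 0 < signedArea o (q a) (q b) (q c)) ∨
      ∀ ⦃a b c : ℝ⦄, 0 ≤ a → a < b → b < c → c ≤ L → signedArea o (q a) (q b) (q c) < 0 := by
  let S : Set (ℝ × ℝ × ℝ) :=
    {x | 0 ≤ x.1} ∩ {x | x.1 < x.2.1} ∩ {x | x.2.1 < x.2.2} ∩ {x | x.2.2 ≤ L}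
  have hS : Convex ℝ S := by
    have hlt {f g : ℝ × ℝ × ℝ →ₗ[ℝ] ℝ} : Convex ℝ {x | f x < g x} := by
      simpa only [LinearMap.sub_apply, sub_pos] using convex_halfSpace_gt (g - f).isLinear 0
    exact (((convex_halfSpace_ge (LinearMap.fst ℝ ℝ (ℝ × ℝ)).isLinear 0).inter
      (hlt (f := .fst ℝ ℝ (ℝ × ℝ)) (g := .fst ℝ ℝ ℝ ∘ₗ .snd ℝ ℝ (ℝ × ℝ)))).inter
      (hlt (f := .fst ℝ ℝ ℝ ∘ₗ .snd ℝ ℝ (ℝ × ℝ)) (g := .snd ℝ ℝ ℝ ∘ₗ .snd ℝ ℝ (ℝ × ℝ)))).inter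
      (convex_halfSpace_le (.snd ℝ ℝ ℝ ∘ₗ .snd ℝ ℝ (ℝ × ℝ) : ℝ × ℝ × ℝ →ₗ[ℝ] ℝ).isLinear L)
  have hcont : ContinuousOn (fun x : ℝ × ℝ × ℝ => signedArea o (q x.1) (q x.2.1) (q x.2.2)) S := by
    have h₁ : ContinuousOn (fun x : ℝ × ℝ × ℝ => q x.1) S :=
      hq.comp continuous_fst.continuousOn fun x ⟨⟨⟨ha, hab⟩, hbc⟩, hc⟩ =>
        ⟨ha, (hab.trans hbc).le.trans hc⟩
    have h₂ : ContinuousOn (fun x : ℝ × ℝ × ℝ => q x.2.1) S :=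
      hq.comp (by fun_prop) fun x ⟨⟨⟨ha, hab⟩, hbc⟩, hc⟩ => ⟨ha.trans hab.le, hbc.le.trans hc⟩
    have h₃ : ContinuousOn (fun x : ℝ × ℝ × ℝ => q x.2.2) S :=
      hq.comp (by fun_prop) fun x ⟨⟨⟨ha, hab⟩, hbc⟩, hc⟩ => ⟨ha.trans (hab.trans hbc).le, hc⟩
    exact continuousOn_areaForm o (h₂.sub h₁) (h₃.sub h₁)
  refine (forall_pos_or_forall_neg_of_ne_zero hS.isPreconnected hcont
    fun x ⟨⟨⟨ha, hab⟩, hbc⟩, hc⟩ => hne ha hab hbc hc).imp ?_ ?_ <;>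
  exact fun h a b c ha hab hbc hc => h (a, b, c) ⟨⟨⟨ha, hab⟩, hbc⟩, hc⟩

theorem injOn_inv_norm_smul_of_gauge_eq_one {V X : Type*} [NormedAddCommGroup V] [NormedSpace ℝ V]
    {C : Set V} {f : X → V} {S : Set X} (hf : InjOn f S) (hgauge : ∀ t ∈ S, gauge C (f t) = 1) :
    InjOn (fun t => ‖f t‖⁻¹ • f t) S := by
  intro s hs t ht hst
  have hne : f t ≠ 0 := fun h => by
    simpa only [h, gauge_zero, zero_ne_one] using hgauge t ht
  have hinv : ‖f s‖⁻¹ = ‖f t‖⁻¹ := by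
    simpa only [gauge_smul_of_nonneg (inv_nonneg.2 (norm_nonneg _)), hgauge s hs, hgauge t ht,
      smul_eq_mul, mul_one] using congrArg (gauge C) hst
  simp only [hinv] at hst
  exact hf hs ht (smul_right_injective V (inv_ne_zero (norm_ne_zero_iff.2 hne)) hst)

-- Distinct points of a circle are never collinear, so inscribed triangles of the radial projection
-- keep one orientation, and the gauge carries a weak form of this back to `p`.
theorem isConvexArc_or_neg_of_gauge_eq_one (o : Orientation ℝ F (Fin 2)) {C : Set F}
    (hC : Convex ℝ C) (h0 : C ∈ 𝓝 0) (hp : ContinuousOn p (Icc 0 L)) (hinj : InjOn p (Icc 0 L))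
    (hgauge : ∀ t ∈ Icc 0 L, gauge C (p t) = 1) : IsConvexArc o p L ∨ IsConvexArc (-o) p L := by
  have hne : ∀ t ∈ Icc 0 L, p t ≠ 0 := fun t ht h => by
    simpa only [h, gauge_zero, zero_ne_one] using hgauge t ht
  have hcont : ContinuousOn (fun t => ‖p t‖⁻¹ • p t) (Icc 0 L) :=
    (hp.norm.inv₀ fun t ht => norm_ne_zero_iff.2 (hne t ht)).smul hp
  have hnorm : ∀ t ∈ Icc 0 L, ‖‖p t‖⁻¹ • p t‖ = 1 := fun t ht =>
    norm_smul_inv_norm (𝕜 := ℝ) (hne t ht)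
  have hradial := injOn_inv_norm_smul_of_gauge_eq_one hinj hgauge
  have hmem {a b c : ℝ} (ha : 0 ≤ a) (hab : a < b) (hbc : b < c) (hc : c ≤ L) :
      a ∈ Icc 0 L ∧ b ∈ Icc 0 L ∧ c ∈ Icc 0 L := by
    refine ⟨⟨ha, ?_⟩, ⟨?_, ?_⟩, ?_, hc⟩ <;> linarith
  have hconvex {o : Orientation ℝ F (Fin 2)} (h : ∀ ⦃a b c : ℝ⦄, 0 ≤ a → a < b → b < c → c ≤ L →
      0 < signedArea o (‖p a‖⁻¹ • p a) (‖p b‖⁻¹ • p b) (‖p c‖⁻¹ • p c)) : IsConvexArc o p L := by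
    refine ⟨hp, hinj, fun a b c ha hab hbc hc => ?_⟩
    obtain ⟨ha', hb', hc'⟩ := hmem ha hab hbc hc
    exact signedArea_nonneg_of_radial_pos o hC h0 (hgauge a ha') (hgauge b hb') (hgauge c hc')
      (h ha hab hbc hc)
  refine (signedArea_pos_or_neg_of_ne_zero o hcont fun a b c ha hab hbc hc => ?_).imp hconvex
    fun h => hconvex fun a b c ha hab hbc hc => ?_
  · obtain ⟨ha', hb', hc'⟩ := hmem ha hab hbc hc
    exact signedArea_ne_zero_of_norm_eq o (hradial.ne ha' hb' hab.ne)
      (hradial.ne ha' hc' (hab.trans hbc).ne) (hradial.ne hb' hc' hbc.ne)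
      ((hnorm a ha').trans (hnorm b hb').symm) ((hnorm a ha').trans (hnorm c hc').symm)
  · rw [signedArea_neg_orientation]
    exact neg_pos.2 (h ha hab hbc hc)

theorem interior_nonempty_of_signedArea_ne_zero {C : Set F} (hC : Convex ℝ C) {x y z : F}
    (hx : x ∈ C) (hy : y ∈ C) (hz : z ∈ C) (h : signedArea o x y z ≠ 0) :
    (interior C).Nonempty := by
  have : FiniteDimensional ℝ F := .of_fact_finrank_eq_two
  rw [hC.interior_nonempty_iff_affineSpan_eq_top,
    AffineSubspace.affineSpan_eq_top_iff_vectorSpan_eq_top_of_nonempty ℝ F F ⟨x, hx⟩, eq_top_iff]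
  intro v _
  have hcomb := areaForm_smul_add_smul_add_smul_eq_zero o (y - x) (z - x) v
  have hv : v = (signedArea o x y z)⁻¹ •
      -(o.areaForm (z - x) v • (y - x) + o.areaForm v (y - x) • (z - x)) := by
    rw [eq_inv_smul_iff₀ h, eq_neg_iff_add_eq_zero, ← add_assoc]
    exact hcomb
  rw [hv]
  exact Submodule.smul_mem _ _ (neg_mem (add_mem
    (Submodule.smul_mem _ _ (vsub_mem_vectorSpan ℝ hy hx))
    (Submodule.smul_mem _ _ (vsub_mem_vectorSpan ℝ hz hx))))

theorem isConvexArc_or_neg_of_mapsTo_frontier (o : Orientation ℝ F (Fin 2)) {C : Set F}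
    (hC : Convex ℝ C) (hclosed : IsClosed C) (hp : ContinuousOn p (Icc 0 L))
    (hinj : InjOn p (Icc 0 L)) (hfr : MapsTo p (Icc 0 L) (frontier C)) :
    IsConvexArc o p L ∨ IsConvexArc (-o) p L := by
  rcases (interior C).eq_empty_or_nonempty with hempty | ⟨x₀, hx₀⟩
  · refine Or.inl ⟨hp, hinj, fun a b c ha hab hbc hc => ?_⟩
    have hmem : ∀ t ∈ Icc 0 L, p t ∈ C := fun t ht => hclosed.frontier_subset (hfr ht)
    refine (not_not.1 fun hne => ?_ : signedArea o (p a) (p b) (p c) = 0).ge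
    exact (interior_nonempty_of_signedArea_ne_zero hC (hmem a ⟨ha, by linarith⟩)
      (hmem b ⟨by linarith, by linarith⟩) (hmem c ⟨by linarith, hc⟩) hne).ne_empty hempty
  have h0 : (fun x => x₀ + x) ⁻¹' C ∈ 𝓝 0 := by
    refine (continuous_const_add x₀).continuousAt.preimage_mem_nhds ?_
    rw [add_zero]
    exact mem_interior_iff_mem_nhds.1 hx₀
  have hC' := hC.translate_preimage_right x₀
  have hgauge : ∀ t ∈ Icc 0 L, gauge ((fun x => x₀ + x) ⁻¹' C) (p t - x₀) = 1 := by
    intro t ht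
    rw [gauge_eq_one_iff_mem_frontier hC' h0,
      ← (isOpenMap_add_left x₀).preimage_frontier_eq_frontier_preimage (continuous_const_add x₀) C,
      mem_preimage, add_sub_cancel]
    exact hfr ht
  refine (isConvexArc_or_neg_of_gauge_eq_one o hC' h0 (hp.sub continuousOn_const)
    (fun s hs t ht hst => hinj hs ht (sub_left_injective hst)) hgauge).imp ?_ ?_ <;>
  · refine fun h => ⟨hp, hinj, fun a b c ha hab hbc hc => ?_⟩
    rw [← signedArea_sub_right _ _ _ _ x₀]
    exact h.signedArea_nonneg ha hab hbc hc

end ConvexArc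

section Heights

variable {F : Type*} [NormedAddCommGroup F] [InnerProductSpace ℝ F]
  [Fact (Module.finrank ℝ F = 2)] {o : Orientation ℝ F (Fin 2)} {p : ℝ → F} {L a b c t t₀ : ℝ}

/-- The signed height of `p t` over the chord from `p 0` to `p L`, scaled by the length of the
chord and measured from the line through the origin parallel to the chord. -/
noncomputable def chordHeight (o : Orientation ℝ F (Fin 2)) (p : ℝ → F) (L t : ℝ) : ℝ :=
  o.areaForm (p L - p 0) (p t)

/-- The coordinate of `p t` along the chord from `p 0` to `p L`, scaled by the length of the
chord. -/
noncomputable def chordCoord (p : ℝ → F) (L t : ℝ) : ℝ :=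
  ⟪p L - p 0, p t⟫

theorem areaForm_chord_sub (o : Orientation ℝ F (Fin 2)) (p : ℝ → F) (L a b : ℝ) :
    o.areaForm (p L - p 0) (p b - p a) = chordHeight o p L b - chordHeight o p L a :=
  map_sub _ _ _

omit [Fact (Module.finrank ℝ F = 2)] in
theorem inner_chord_sub (p : ℝ → F) (L a b : ℝ) :
    ⟪p L - p 0, p b - p a⟫ = chordCoord p L b - chordCoord p L a :=
  inner_sub_right _ _ _

theorem chordHeight_right (o : Orientation ℝ F (Fin 2)) (p : ℝ → F) (L : ℝ) :
    chordHeight o p L L = chordHeight o p L 0 := by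
  rw [← sub_eq_zero, ← areaForm_chord_sub, o.areaForm_apply_self]

namespace IsConvexArc

theorem continuousOn_chordHeight (hp : IsConvexArc o p L) :
    ContinuousOn (chordHeight o p L) (Icc 0 L) :=
  continuousOn_areaForm o continuousOn_const hp.continuousOn

theorem chord_ne_zero (hp : IsConvexArc o p L) (hL : 0 < L) : p L - p 0 ≠ 0 :=
  sub_ne_zero.2 (hp.injOn.ne (right_mem_Icc.2 hL.le) (left_mem_Icc.2 hL.le) hL.ne')

theorem eq_of_chordHeight_eq_of_chordCoord_eq (hp : IsConvexArc o p L) (hL : 0 < L)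
    (ha : a ∈ Icc 0 L) (hb : b ∈ Icc 0 L) (hheight : chordHeight o p L a = chordHeight o p L b)
    (hcoord : chordCoord p L a = chordCoord p L b) : a = b := by
  have h := o.inner_sq_add_areaForm_sq (p L - p 0) (p a - p b)
  rw [inner_sub_right, map_sub] at h
  simp only [chordHeight, chordCoord] at hheight hcoord
  rw [hheight, hcoord, sub_self, sub_self, zero_pow two_ne_zero, add_zero, ← mul_pow, eq_comm,
    pow_eq_zero_iff two_ne_zero, mul_eq_zero, norm_eq_zero, norm_eq_zero] at h
  exact hp.injOn ha hb (sub_eq_zero.1 (h.resolve_left (hp.chord_ne_zero hL)))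

theorem chordCoord_chordHeight_cross_nonneg (hp : IsConvexArc o p L)
    (ha : 0 ≤ a) (hab : a < b) (hbc : b < c) (hc : c ≤ L) :
    0 ≤ (chordCoord p L b - chordCoord p L a) * (chordHeight o p L c - chordHeight o p L a)
      - (chordHeight o p L b - chordHeight o p L a) * (chordCoord p L c - chordCoord p L a) := by
  simp only [chordHeight, chordCoord, ← map_sub, ← inner_sub_right]
  rw [o.inner_mul_areaForm_sub]
  exact mul_nonneg (sq_nonneg _) (hp.signedArea_nonneg ha hab hbc hc)

theorem chordHeight_le_left (hp : IsConvexArc o p L) (ht : t ∈ Icc 0 L) :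
    chordHeight o p L t ≤ chordHeight o p L 0 := by
  rcases ht.1.eq_or_lt with rfl | h0
  · exact le_rfl
  rcases ht.2.eq_or_lt with rfl | hL
  · exact (chordHeight_right o p t).le
  have h := hp.signedArea_nonneg le_rfl h0 hL le_rfl
  rw [signedArea, o.areaForm_swap, map_sub] at h
  exact sub_nonpos.1 (neg_nonneg.1 h)

theorem chordHeight_le_of_eq (hp : IsConvexArc o p L) (ha : 0 ≤ a) (hab : a < b) (hbc : b < c)
    (hc : c ≤ L) (hac : chordHeight o p L a = chordHeight o p L c) :
    chordHeight o p L b ≤ chordHeight o p L c := by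
  by_contra! hlt
  have hL : 0 < L := by linarith
  have hb : chordHeight o p L b ≤ chordHeight o p L L :=
    (hp.chordHeight_le_left ⟨by linarith, by linarith⟩).trans_eq (chordHeight_right o p L).symm
  rcases hc.eq_or_lt with rfl | hcL
  · exact hlt.not_ge hb
  have hle : chordCoord p L c ≤ chordCoord p L a := by
    have h := hp.chordCoord_chordHeight_cross_nonneg ha hab hbc hc
    rw [hac, sub_self, mul_zero, zero_sub, neg_nonneg] at h
    exact sub_nonpos.1 (nonpos_of_mul_nonpos_right h (sub_pos.2 hlt))
  have hge : chordCoord p L a ≤ chordCoord p L c := by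
    have h := hp.chordCoord_chordHeight_cross_nonneg ha (hab.trans hbc) hcL le_rfl
    rw [hac, sub_self, zero_mul, sub_zero] at h
    exact sub_nonneg.1 (nonneg_of_mul_nonneg_left h (sub_pos.2 (hlt.trans_le hb)))
  exact (hab.trans hbc).ne (hp.eq_of_chordHeight_eq_of_chordCoord_eq hL ⟨ha, by linarith⟩
    ⟨by linarith, hc⟩ hac (hge.antisymm hle))

theorem exists_isMinOn_chordHeight (hp : IsConvexArc o p L) (hL : 0 < L) :
    ∃ t₀ ∈ Ioo 0 L, IsMinOn (chordHeight o p L) (Icc 0 L) t₀ := by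
  obtain ⟨t₀, ht₀, hmin⟩ :=
    isCompact_Icc.exists_isMinOn (nonempty_Icc.2 hL.le) hp.continuousOn_chordHeight
  by_cases hend : chordHeight o p L t₀ = chordHeight o p L 0
  · exact ⟨L / 2, ⟨by linarith, by linarith⟩, fun t ht =>
      (hp.chordHeight_le_left ⟨by linarith, by linarith⟩).trans (hend.symm.le.trans (hmin ht))⟩
  · refine ⟨t₀, ⟨ht₀.1.lt_of_ne ?_, ht₀.2.lt_of_ne ?_⟩, hmin⟩ <;> rintro rfl
    exacts [hend rfl, hend (chordHeight_right o p t₀)]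

section Minimizer

variable (hp : IsConvexArc o p L) (ht₀ : t₀ ∈ Ioo 0 L)
  (hmin : IsMinOn (chordHeight o p L) (Icc 0 L) t₀)
include hp ht₀ hmin

theorem monotoneOn_chordHeight : MonotoneOn (chordHeight o p L) (Icc t₀ L) := by
  intro b hb c hc hbc
  by_contra! hlt
  have hsub : Icc t₀ b ⊆ Icc 0 L := Icc_subset_Icc ht₀.1.le hb.2
  obtain ⟨a, ha, hac⟩ := intermediate_value_Icc hb.1 (hp.continuousOn_chordHeight.mono hsub)
    ⟨hmin ⟨ht₀.1.le.trans hc.1, hc.2⟩, hlt.le⟩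
  have hab : a < b := ha.2.lt_of_ne fun h => hlt.ne (h ▸ hac).symm
  have hbc' : b < c := hbc.lt_of_ne fun h => hlt.ne (congrArg _ h.symm)
  exact hlt.not_ge (hp.chordHeight_le_of_eq (hsub ha).1 hab hbc' hc.2 hac)

theorem antitoneOn_chordHeight : AntitoneOn (chordHeight o p L) (Icc 0 t₀) := by
  intro a ha b hb hab
  by_contra! hlt
  have hsub : Icc b t₀ ⊆ Icc 0 L := Icc_subset_Icc hb.1 ht₀.2.le
  obtain ⟨c, hc, hac⟩ := intermediate_value_Icc' hb.2 (hp.continuousOn_chordHeight.mono hsub)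
    ⟨hmin ⟨ha.1, ha.2.trans ht₀.2.le⟩, hlt.le⟩
  have hab' : a < b := hab.lt_of_ne fun h => hlt.ne (congrArg _ h)
  have hbc : b < c := hc.1.lt_of_ne fun h => hlt.ne (h ▸ hac).symm
  exact hlt.not_ge ((hp.chordHeight_le_of_eq ha.1 hab' hbc (hsub hc).2 hac.symm).trans_eq hac)

end Minimizer

theorem strictMonoOn_or_strictAntiOn_chordCoord (hp : IsConvexArc o p L) (ha : 0 ≤ a) (hac : a < c)
    (hc : c ≤ L) {h : ℝ} (hlevel : ∀ t ∈ Icc a c, chordHeight o p L t = h) :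
    StrictMonoOn (chordCoord p L) (Icc a c) ∨ StrictAntiOn (chordCoord p L) (Icc a c) := by
  have hsub : Icc a c ⊆ Icc 0 L := Icc_subset_Icc ha hc
  refine ContinuousOn.strictMonoOn_of_injOn_Icc' hac.le
    (continuousOn_const.inner (hp.continuousOn.mono hsub)) fun s hs t ht hst => ?_
  exact hp.eq_of_chordHeight_eq_of_chordCoord_eq (by linarith) (hsub hs) (hsub ht)
    ((hlevel s hs).trans (hlevel t ht).symm) hst

theorem chordCoord_lt_of_chordHeight_eq (hp : IsConvexArc o p L)
    (hmin : IsMinOn (chordHeight o p L) (Icc 0 L) t₀) (ha : 0 ≤ a) (hat : a < t₀) (htb : t₀ < b)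
    (hb : b ≤ L) (hab : chordHeight o p L a = chordHeight o p L b) :
    chordCoord p L a < chordCoord p L b := by
  have hL : 0 < L := by linarith
  have ha' : a ∈ Icc 0 L := ⟨ha, by linarith⟩
  have hb' : b ∈ Icc 0 L := ⟨by linarith, hb⟩
  suffices hle : chordCoord p L a ≤ chordCoord p L b from hle.lt_of_ne fun h =>
    (hat.trans htb).ne (hp.eq_of_chordHeight_eq_of_chordCoord_eq hL ha' hb' hab h)
  rcases (isMinOn_iff.1 hmin a ha').lt_or_eq with hlt | hflat
  · have h := hp.chordCoord_chordHeight_cross_nonneg ha hat htb hb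
    rw [← hab, sub_self, mul_zero, zero_sub, neg_nonneg] at h
    exact sub_nonneg.1 (nonneg_of_mul_nonpos_right h (sub_neg.2 hlt))
  rcases (hp.chordHeight_le_left ha').lt_or_eq with hlt | hlevel
  · have h := hp.chordCoord_chordHeight_cross_nonneg le_rfl
      (ha.lt_of_ne fun h => hlt.ne (congrArg _ h.symm)) (hat.trans htb) hb
    rw [← hab, mul_comm, ← mul_sub] at h
    linarith [nonpos_of_mul_nonneg_right h (sub_neg.2 hlt)]
  · have hconst : ∀ t ∈ Icc 0 L, chordHeight o p L t = chordHeight o p L 0 := fun t ht =>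
      (hp.chordHeight_le_left ht).antisymm (hlevel ▸ hflat ▸ hmin ht)
    rcases hp.strictMonoOn_or_strictAntiOn_chordCoord le_rfl hL le_rfl hconst with hmono | hanti
    · exact (hmono ha' hb' (hat.trans htb)).le
    · have h := hanti (left_mem_Icc.2 hL.le) (right_mem_Icc.2 hL.le) hL
      rw [← sub_neg, chordCoord, chordCoord, ← inner_sub_right, real_inner_self_eq_norm_sq] at h
      exact absurd h (sq_nonneg _).not_gt

end IsConvexArc

end Heights

section EdgeAngles

variable {F : Type*} [NormedAddCommGroup F] [InnerProductSpace ℝ F]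
  [Fact (Module.finrank ℝ F = 2)] {o : Orientation ℝ F (Fin 2)} {p : ℝ → F}
  {L a b c d s t t₀ : ℝ}

/-- The edge from `p a` to `p b` belongs to the rising part of the arc: it ends after the lowest
time `t₀` and its height does not decrease. Edges parallel to the chord count as rising after `t₀`
only, so that `edgeAngle` is monotone along the arc. -/
def IsRising (o : Orientation ℝ F (Fin 2)) (p : ℝ → F) (L t₀ a b : ℝ) : Prop :=
  t₀ < b ∧ chordHeight o p L a ≤ chordHeight o p L b

open Classical in
/-- The angle from the chord `p L - p 0` to the edge `p b - p a` in `[-π, π]`, counted as positive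
when the edge is rising and as negative otherwise. -/
noncomputable def edgeAngle (o : Orientation ℝ F (Fin 2)) (p : ℝ → F) (L t₀ a b : ℝ) : ℝ :=
  if IsRising o p L t₀ a b then angle (p L - p 0) (p b - p a) else -angle (p L - p 0) (p b - p a)

/-- The angle from the chord `p L - p 0` to the velocity of `p` at time `t`, negative before the
lowest point `p t₀` of the arc and positive after it. -/
noncomputable def tangentAngle (p : ℝ → F) (L t₀ t : ℝ) : ℝ :=
  if t₀ < t then angle (p L - p 0) (deriv p t) else -angle (p L - p 0) (deriv p t)

theorem edgeAngle_of_le_left (hbt : b ≤ t₀) :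
    edgeAngle o p L t₀ a b = -angle (p L - p 0) (p b - p a) :=
  if_neg fun h => hbt.not_gt h.1

namespace IsConvexArc

theorem edge_ne_zero (hp : IsConvexArc o p L) (ha : 0 ≤ a) (hab : a < b) (hb : b ≤ L) :
    p b - p a ≠ 0 :=
  sub_ne_zero.2 (hp.injOn.ne ⟨by linarith, hb⟩ ⟨ha, by linarith⟩ hab.ne')

theorem areaForm_edge_nonneg (hp : IsConvexArc o p L) (ha : 0 ≤ a) (hab : a < b) (hbc : b < c)
    (hc : c ≤ L) : 0 ≤ o.areaForm (p b - p a) (p c - p b) := by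
  have h := hp.signedArea_nonneg ha hab hbc hc
  rwa [signedArea, ← sub_add_sub_cancel (p c) (p b) (p a), map_add, o.areaForm_apply_self,
    add_zero] at h

variable (hp : IsConvexArc o p L) (ht₀ : t₀ ∈ Ioo 0 L)
  (hmin : IsMinOn (chordHeight o p L) (Icc 0 L) t₀)
include hp ht₀ hmin

theorem isRising_of_le (hta : t₀ ≤ a) (hab : a < b) (hb : b ≤ L) : IsRising o p L t₀ a b :=
  ⟨hta.trans_lt hab,
    hp.monotoneOn_chordHeight ht₀ hmin ⟨hta, by linarith⟩ ⟨by linarith, hb⟩ hab.le⟩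

theorem chordHeight_le_of_not_isRising (ha : 0 ≤ a) (hab : a < b) (h : ¬IsRising o p L t₀ a b) :
    chordHeight o p L b ≤ chordHeight o p L a := by
  rcases le_or_gt b t₀ with hbt | htb
  · exact hp.antitoneOn_chordHeight ht₀ hmin ⟨ha, by linarith⟩ ⟨by linarith, hbt⟩ hab.le
  · exact (not_le.1 fun hle => h ⟨htb, hle⟩).le

theorem chordCoord_le_of_isRising (ha : 0 ≤ a) (hab : a < b) (hbc : b < c) (hc : c ≤ L)
    (hr : IsRising o p L t₀ a b) (hhab : chordHeight o p L a = chordHeight o p L b)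
    (hhbc : chordHeight o p L b = chordHeight o p L c)
    (hcoord : chordCoord p L b < chordCoord p L a) : chordCoord p L c ≤ chordCoord p L b := by
  have hta : t₀ ≤ a := not_lt.1 fun h =>
    (hp.chordCoord_lt_of_chordHeight_eq hmin ha h hr.1 (by linarith) hhab).not_gt hcoord
  have hmono := hp.monotoneOn_chordHeight ht₀ hmin
  have hlevel : ∀ t ∈ Icc a c, chordHeight o p L t = chordHeight o p L a := fun t ht =>
    ((hmono ⟨by linarith [ht.1], by linarith [ht.2]⟩ ⟨by linarith, hc⟩ ht.2).trans_eq
      (hhab.trans hhbc).symm).antisymm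
        (hmono ⟨hta, by linarith⟩ ⟨by linarith [ht.1], by linarith [ht.2]⟩ ht.1)
  rcases hp.strictMonoOn_or_strictAntiOn_chordCoord ha (hab.trans hbc) hc hlevel with h | h
  · exact absurd hcoord (h ⟨le_rfl, by linarith⟩ ⟨hab.le, hbc.le⟩ hab).not_gt
  · exact (h ⟨hab.le, hbc.le⟩ ⟨by linarith, le_rfl⟩ hbc).le

theorem chordCoord_le_of_not_isRising (ha : 0 ≤ a) (hab : a < b) (hbc : b < c) (hc : c ≤ L)
    (hr : ¬IsRising o p L t₀ b c) (hhab : chordHeight o p L a = chordHeight o p L b)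
    (hhbc : chordHeight o p L b = chordHeight o p L c)
    (hcoord : chordCoord p L c < chordCoord p L b) : chordCoord p L b ≤ chordCoord p L a := by
  have hct : c ≤ t₀ := not_lt.1 fun h => hr ⟨h, hhbc.le⟩
  have hanti := hp.antitoneOn_chordHeight ht₀ hmin
  have hlevel : ∀ t ∈ Icc a c, chordHeight o p L t = chordHeight o p L a := fun t ht =>
    (hanti ⟨ha, by linarith⟩ ⟨by linarith [ht.1], by linarith [ht.2]⟩ ht.1).antisymm
      ((hhab.trans hhbc).trans_le
        (hanti ⟨by linarith [ht.1], by linarith [ht.2]⟩ ⟨by linarith, hct⟩ ht.2))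
  rcases hp.strictMonoOn_or_strictAntiOn_chordCoord ha (hab.trans hbc) hc hlevel with h | h
  · exact absurd hcoord (h ⟨hab.le, hbc.le⟩ ⟨by linarith, le_rfl⟩ hbc).not_gt
  · exact (h ⟨le_rfl, by linarith⟩ ⟨hab.le, hbc.le⟩ hab).le

theorem angle_eq_sub_of_isRising (ha : 0 ≤ a) (hab : a < b) (hbc : b < c) (hc : c ≤ L)
    (hr : IsRising o p L t₀ a b) : angle (p b - p a) (p c - p b) =
      angle (p L - p 0) (p c - p b) - angle (p L - p 0) (p b - p a) := by
  have hheight := (hp.isRising_of_le ht₀ hmin hr.1.le hbc hc).2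
  refine angle_eq_sub_of_areaForm_nonneg o (hp.chord_ne_zero (by linarith))
    (hp.edge_ne_zero ha hab (by linarith)) (hp.edge_ne_zero (by linarith) hbc hc) ?_ ?_
    (hp.areaForm_edge_nonneg ha hab hbc hc) ?_
  · rw [areaForm_chord_sub]
    exact sub_nonneg.2 hr.2
  · rw [areaForm_chord_sub]
    exact sub_nonneg.2 hheight
  · simp only [areaForm_chord_sub, inner_chord_sub, sub_eq_zero, sub_neg, sub_nonpos]
    exact fun hhab hhbc =>
      hp.chordCoord_le_of_isRising ht₀ hmin ha hab hbc hc hr hhab.symm hhbc.symm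

theorem angle_eq_sub_of_not_isRising (ha : 0 ≤ a) (hab : a < b) (hbc : b < c) (hc : c ≤ L)
    (hrab : ¬IsRising o p L t₀ a b) (hrbc : ¬IsRising o p L t₀ b c) :
    angle (p b - p a) (p c - p b) =
      angle (p L - p 0) (p b - p a) - angle (p L - p 0) (p c - p b) := by
  have hheight_ab := hp.chordHeight_le_of_not_isRising ht₀ hmin ha hab hrab
  have hheight_bc := hp.chordHeight_le_of_not_isRising ht₀ hmin (by linarith) hbc hrbc
  rw [angle_comm]
  refine angle_eq_sub_of_areaForm_nonneg (-o) (hp.chord_ne_zero (by linarith))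
    (hp.edge_ne_zero (by linarith) hbc hc) (hp.edge_ne_zero ha hab (by linarith)) ?_ ?_ ?_ ?_ <;>
    simp only [o.areaForm_neg_orientation, LinearMap.neg_apply, areaForm_chord_sub, neg_sub,
      inner_chord_sub, sub_eq_zero, sub_neg, sub_nonneg, sub_nonpos]
  · exact hheight_bc
  · exact hheight_ab
  · exact (hp.areaForm_edge_nonneg ha hab hbc hc).trans_eq (o.areaForm_swap _ _)
  · exact fun hhbc hhab => hp.chordCoord_le_of_not_isRising ht₀ hmin ha hab hbc hc hrbc hhab hhbc

theorem angle_le_edgeAngle_sub_edgeAngle (ha : 0 ≤ a) (hab : a < b) (hbc : b < c) (hc : c ≤ L) :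
    angle (p b - p a) (p c - p b) ≤ edgeAngle o p L t₀ b c - edgeAngle o p L t₀ a b := by
  by_cases hrab : IsRising o p L t₀ a b
  · rw [edgeAngle, edgeAngle, if_pos hrab,
      if_pos (hp.isRising_of_le ht₀ hmin hrab.1.le hbc hc)]
    exact (hp.angle_eq_sub_of_isRising ht₀ hmin ha hab hbc hc hrab).le
  by_cases hrbc : IsRising o p L t₀ b c
  · rw [edgeAngle, edgeAngle, if_neg hrab, if_pos hrbc, sub_neg_eq_add, add_comm,
      angle_comm (p L - p 0) (p b - p a)]
    exact angle_le_angle_add_angle _ _ _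
  · rw [edgeAngle, edgeAngle, if_neg hrab, if_neg hrbc, neg_sub_neg]
    exact (hp.angle_eq_sub_of_not_isRising ht₀ hmin ha hab hbc hc hrab hrbc).le

theorem edgeAngle_le_edgeAngle (ha : 0 ≤ a) (hab : a < b) (hbc : b ≤ c) (hcd : c < d)
    (hd : d ≤ L) : edgeAngle o p L t₀ a b ≤ edgeAngle o p L t₀ c d := by
  have hstep {a b c : ℝ} (ha : 0 ≤ a) (hab : a < b) (hbc : b < c) (hc : c ≤ L) :
      edgeAngle o p L t₀ a b ≤ edgeAngle o p L t₀ b c :=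
    sub_nonneg.1 ((angle_nonneg _ _).trans
      (hp.angle_le_edgeAngle_sub_edgeAngle ht₀ hmin ha hab hbc hc))
  rcases hbc.eq_or_lt with rfl | hbc
  · exact hstep ha hab hcd hd
  · exact (hstep ha hab hbc (by linarith)).trans (hstep (by linarith) hbc hcd hd)

theorem edgeAngle_of_le (hta : t₀ ≤ a) (hab : a < b) (hb : b ≤ L) :
    edgeAngle o p L t₀ a b = angle (p L - p 0) (p b - p a) :=
  if_pos (hp.isRising_of_le ht₀ hmin hta hab hb)

theorem tendsto_edgeAngle_left (hs : s ∈ Ioo 0 L) (hst : s ≠ t₀) (hps : deriv p s ≠ 0) :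
    Tendsto (fun δ => edgeAngle o p L t₀ (s - δ) s) (𝓝[>] 0) (𝓝 (tangentAngle p L t₀ s)) := by
  have hlim := tendsto_angle_of_tendsto_inv_smul (hp.chord_ne_zero (hs.1.trans hs.2)) hps
    (tendsto_slope_left (differentiableAt_of_deriv_ne_zero hps).hasDerivAt)
  rcases hst.lt_or_gt with hlt | hgt
  · rw [tangentAngle, if_neg hlt.not_gt]
    exact hlim.neg.congr fun δ => (edgeAngle_of_le_left hlt.le).symm
  · rw [tangentAngle, if_pos hgt]
    refine hlim.congr' ?_
    filter_upwards [Ioo_mem_nhdsGT (sub_pos.2 hgt)] with δ hδ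
    exact (hp.edgeAngle_of_le ht₀ hmin (by linarith [hδ.2]) (by linarith [hδ.1]) hs.2.le).symm

theorem tendsto_edgeAngle_right (hs : s ∈ Ioo 0 L) (hst : s ≠ t₀) (hps : deriv p s ≠ 0) :
    Tendsto (fun δ => edgeAngle o p L t₀ s (s + δ)) (𝓝[>] 0) (𝓝 (tangentAngle p L t₀ s)) := by
  have hlim := tendsto_angle_of_tendsto_inv_smul (hp.chord_ne_zero (hs.1.trans hs.2)) hps
    (tendsto_slope_right (differentiableAt_of_deriv_ne_zero hps).hasDerivAt)
  rcases hst.lt_or_gt with hlt | hgt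
  · rw [tangentAngle, if_neg hlt.not_gt]
    refine hlim.neg.congr' ?_
    filter_upwards [Ioo_mem_nhdsGT (sub_pos.2 hlt)] with δ hδ
    exact (edgeAngle_of_le_left (by linarith [hδ.2])).symm
  · rw [tangentAngle, if_pos hgt]
    refine hlim.congr' ?_
    filter_upwards [Ioo_mem_nhdsGT (sub_pos.2 hs.2)] with δ hδ
    exact (hp.edgeAngle_of_le ht₀ hmin hgt.le (by linarith [hδ.1]) (by linarith [hδ.2])).symm

theorem tangentAngle_le_edgeAngle (hs : s ∈ Ioo 0 L) (hst : s ≠ t₀) (hps : deriv p s ≠ 0)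
    (hsa : s ≤ a) (hab : a < b) (hb : b ≤ L) : tangentAngle p L t₀ s ≤ edgeAngle o p L t₀ a b := by
  refine le_of_tendsto (hp.tendsto_edgeAngle_left ht₀ hmin hs hst hps) ?_
  filter_upwards [Ioo_mem_nhdsGT hs.1] with δ hδ
  exact hp.edgeAngle_le_edgeAngle ht₀ hmin (by linarith [hδ.2]) (by linarith [hδ.1]) hsa hab hb

theorem edgeAngle_le_tangentAngle (ht : t ∈ Ioo 0 L) (htt₀ : t ≠ t₀) (hpt : deriv p t ≠ 0)
    (ha : 0 ≤ a) (hab : a < b) (hbt : b ≤ t) : edgeAngle o p L t₀ a b ≤ tangentAngle p L t₀ t := by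
  refine ge_of_tendsto (hp.tendsto_edgeAngle_right ht₀ hmin ht htt₀ hpt) ?_
  filter_upwards [Ioo_mem_nhdsGT (sub_pos.2 ht.2)] with δ hδ
  exact hp.edgeAngle_le_edgeAngle ht₀ hmin ha hab hbt (by linarith [hδ.1]) (by linarith [hδ.2])

theorem tangentAngle_le_tangentAngle (hs : s ∈ Ioo 0 L) (hst₀ : s ≠ t₀) (hps : deriv p s ≠ 0)
    (ht : t ∈ Ioo 0 L) (htt₀ : t ≠ t₀) (hpt : deriv p t ≠ 0) (hst : s < t) :
    tangentAngle p L t₀ s ≤ tangentAngle p L t₀ t :=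
  (hp.tangentAngle_le_edgeAngle ht₀ hmin hs hst₀ hps le_rfl hst ht.2.le).trans
    (hp.edgeAngle_le_tangentAngle ht₀ hmin ht htt₀ hpt hs.1.le hst le_rfl)

theorem polyTC_le_tangentAngle_sub (hs : s ∈ Ioo 0 L) (hst₀ : s ≠ t₀) (hps : deriv p s ≠ 0)
    (ht : t ∈ Ioo 0 L) (htt₀ : t ≠ t₀) (hpt : deriv p t ≠ 0) (hst : s < t) {m : ℕ} {u : ℕ → ℝ}
    (hu : InscribedIn s t m u) :
    polyTC p m u ≤ tangentAngle p L t₀ t - tangentAngle p L t₀ s := by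
  rw [polyTC, collapse_vertexList_of_injOn (hp.injOn.mono (Icc_subset_Icc hs.1.le ht.2.le)) hu]
  obtain ⟨hlt, hmem⟩ := hu
  have hs_le i (hi : i ≤ m) : s ≤ u i := (hmem i hi).1
  have hle_t i (hi : i ≤ m) : u i ≤ t := (hmem i hi).2
  have hmono := hp.tangentAngle_le_tangentAngle ht₀ hmin hs hst₀ hps ht htt₀ hpt hst
  rcases m with _ | _ | m
  · simpa only [vertexList_zero, turnSum, sub_nonneg] using hmono
  · simpa only [vertexList_succ, vertexList_zero, turnSum, sub_nonneg] using hmono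
  calc turnSum (vertexList p (m + 2) u)
    _ = ∑ i ∈ Finset.range (m + 1),
        angle (p (u (i + 1)) - p (u i)) (p (u (i + 2)) - p (u (i + 1))) :=
      turnSum_vertexList p (m + 1) u
    _ ≤ ∑ i ∈ Finset.range (m + 1),
        (edgeAngle o p L t₀ (u (i + 1)) (u (i + 2)) - edgeAngle o p L t₀ (u i) (u (i + 1))) := by
      refine Finset.sum_le_sum fun i hi => ?_
      have hi' : i < m + 1 := Finset.mem_range.1 hi
      exact hp.angle_le_edgeAngle_sub_edgeAngle ht₀ hmin (hs.1.le.trans (hs_le i (by omega)))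
        (hlt i (by omega)) (hlt (i + 1) (by omega)) ((hle_t (i + 2) (by omega)).trans ht.2.le)
    _ = edgeAngle o p L t₀ (u (m + 1)) (u (m + 2)) - edgeAngle o p L t₀ (u 0) (u 1) :=
      Finset.sum_range_sub (fun i => edgeAngle o p L t₀ (u i) (u (i + 1))) (m + 1)
    _ ≤ tangentAngle p L t₀ t - tangentAngle p L t₀ s :=
      sub_le_sub
        (hp.edgeAngle_le_tangentAngle ht₀ hmin ht htt₀ hpt
          (hs.1.le.trans (hs_le (m + 1) (by omega))) (hlt (m + 1) (by omega))
          (hle_t (m + 2) le_rfl))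
        (hp.tangentAngle_le_edgeAngle ht₀ hmin hs hst₀ hps (hs_le 0 (by omega)) (hlt 0 (by omega))
          ((hle_t 1 (by omega)).trans ht.2.le))

theorem arcTC_le_tangentAngle_sub (hs : s ∈ Ioo 0 L) (hst₀ : s ≠ t₀) (hps : deriv p s ≠ 0)
    (ht : t ∈ Ioo 0 L) (htt₀ : t ≠ t₀) (hpt : deriv p t ≠ 0) (hst : s < t) :
    arcTC p s t ≤ ENNReal.ofReal (tangentAngle p L t₀ t - tangentAngle p L t₀ s) :=
  iSup_le fun _ => iSup_le fun _ => iSup_le fun hu => ENNReal.ofReal_le_ofReal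
    (hp.polyTC_le_tangentAngle_sub ht₀ hmin hs hst₀ hps ht htt₀ hpt hst hu)

end IsConvexArc

end EdgeAngles

section Comparison

variable {E F : Type*} [NormedAddCommGroup E] [InnerProductSpace ℝ E] [NormedAddCommGroup F]
  [InnerProductSpace ℝ F] [Fact (Module.finrank ℝ F = 2)] {o : Orientation ℝ F (Fin 2)}
  {p : ℝ → F} {γ : ℝ → E} {L r s t t₀ : ℝ} {T : E}

namespace IsConvexArc

section Minimizer

variable (hp : IsConvexArc o p L) (ht₀ : t₀ ∈ Ioo 0 L)
  (hmin : IsMinOn (chordHeight o p L) (Icc 0 L) t₀)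
  (hcomp : ∀ a b, 0 ≤ a → a ≤ b → b ≤ L → arcTC γ a b ≤ arcTC p a b)
include hp ht₀ hmin hcomp

theorem angle_deriv_le_tangentAngle_sub (hs : s ∈ Ioo 0 L) (hst₀ : s ≠ t₀)
    (hps : ‖deriv p s‖ = 1) (hγs : ‖deriv γ s‖ = 1) (ht : t ∈ Ioo 0 L) (htt₀ : t ≠ t₀)
    (hpt : ‖deriv p t‖ = 1) (hγt : ‖deriv γ t‖ = 1) (hst : s < t) :
    angle (deriv γ s) (deriv γ t) ≤ tangentAngle p L t₀ t - tangentAngle p L t₀ s := by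
  have hps₀ : deriv p s ≠ 0 := norm_ne_zero_iff.1 (hps.trans_ne one_ne_zero)
  have hpt₀ : deriv p t ≠ 0 := norm_ne_zero_iff.1 (hpt.trans_ne one_ne_zero)
  have hγs₀ : deriv γ s ≠ 0 := norm_ne_zero_iff.1 (hγs.trans_ne one_ne_zero)
  have hγt₀ : deriv γ t ≠ 0 := norm_ne_zero_iff.1 (hγt.trans_ne one_ne_zero)
  have hmono := hp.tangentAngle_le_tangentAngle ht₀ hmin hs hst₀ hps₀ ht htt₀ hpt₀ hst
  rw [← ENNReal.ofReal_le_ofReal_iff (sub_nonneg.2 hmono)]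
  calc ENNReal.ofReal (angle (deriv γ s) (deriv γ t))
    _ ≤ arcTC γ s t := ofReal_angle_deriv_le_arcTC hst hγs₀ hγt₀
      (differentiableAt_of_deriv_ne_zero hγs₀).hasDerivAt
      (differentiableAt_of_deriv_ne_zero hγt₀).hasDerivAt
    _ ≤ arcTC p s t := hcomp s t hs.1.le hst.le ht.2.le
    _ ≤ ENNReal.ofReal (tangentAngle p L t₀ t - tangentAngle p L t₀ s) :=
      hp.arcTC_le_tangentAngle_sub ht₀ hmin hs hst₀ hps₀ ht htt₀ hpt₀ hst

theorem cos_angle_le_inner_of_lt (hT : ‖T‖ ≤ 1) (hs : s ∈ Ioo 0 t₀) (hps : ‖deriv p s‖ = 1)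
    (hγs : ‖deriv γ s‖ = 1)
    (hTs : Real.cos (angle (p L - p 0) (deriv p s)) ≤ ⟪T, deriv γ s⟫) (hr : r ∈ Ioo 0 s)
    (hpr : ‖deriv p r‖ = 1) (hγr : ‖deriv γ r‖ = 1) :
    Real.cos (angle (p L - p 0) (deriv p r)) ≤ ⟪T, deriv γ r⟫ := by
  have hrt₀ : r < t₀ := hr.2.trans hs.2
  have hangle := hp.angle_deriv_le_tangentAngle_sub ht₀ hmin hcomp
    ⟨hr.1, hrt₀.trans ht₀.2⟩ hrt₀.ne hpr hγr
    ⟨hs.1, hs.2.trans ht₀.2⟩ hs.2.ne hps hγs hr.2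
  rw [tangentAngle, tangentAngle, if_neg hs.2.not_gt, if_neg hrt₀.not_gt, neg_sub_neg,
    angle_comm] at hangle
  have h := cos_add_le_inner hT hγs hγr (angle_nonneg _ _) hTs hangle
    ((add_sub_cancel _ _).trans_le (angle_le_pi _ _))
  rwa [add_sub_cancel] at h

theorem cos_angle_le_inner_of_gt (hT : ‖T‖ ≤ 1) (ht : t ∈ Ioo t₀ L) (hpt : ‖deriv p t‖ = 1)
    (hγt : ‖deriv γ t‖ = 1)
    (hTt : Real.cos (angle (p L - p 0) (deriv p t)) ≤ ⟪T, deriv γ t⟫) (hr : r ∈ Ioo t L)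
    (hpr : ‖deriv p r‖ = 1) (hγr : ‖deriv γ r‖ = 1) :
    Real.cos (angle (p L - p 0) (deriv p r)) ≤ ⟪T, deriv γ r⟫ := by
  have hrt₀ : t₀ < r := ht.1.trans hr.1
  have hangle := hp.angle_deriv_le_tangentAngle_sub ht₀ hmin hcomp
    ⟨ht₀.1.trans ht.1, ht.2⟩ ht.1.ne' hpt hγt
    ⟨ht₀.1.trans hrt₀, hr.2⟩ hrt₀.ne' hpr hγr
    hr.1
  rw [tangentAngle, tangentAngle, if_pos ht.1, if_pos hrt₀] at hangle
  have h := cos_add_le_inner hT hγt hγr (angle_nonneg _ _) hTt hangle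
    ((add_sub_cancel _ _).trans_le (angle_le_pi _ _))
  rwa [add_sub_cancel] at h

theorem exists_cos_angle_le_inner (hs : s ∈ Ioo 0 t₀) (hps : ‖deriv p s‖ = 1)
    (hγs : ‖deriv γ s‖ = 1) (ht : t ∈ Ioo t₀ L) (hpt : ‖deriv p t‖ = 1) (hγt : ‖deriv γ t‖ = 1) :
    ∃ T : E, ‖T‖ ≤ 1 ∧ Real.cos (angle (p L - p 0) (deriv p s)) ≤ ⟪T, deriv γ s⟫ ∧
      Real.cos (angle (p L - p 0) (deriv p t)) ≤ ⟪T, deriv γ t⟫ := by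
  have hangle := hp.angle_deriv_le_tangentAngle_sub ht₀ hmin hcomp
    ⟨hs.1, hs.2.trans ht₀.2⟩ hs.2.ne hps hγs
    ⟨ht₀.1.trans ht.1, ht.2⟩ ht.1.ne' hpt hγt
    (hs.2.trans ht.1)
  rw [tangentAngle, tangentAngle, if_pos ht.1, if_neg hs.2.not_gt, sub_neg_eq_add, add_comm]
    at hangle
  exact exists_cos_le_inner_and_cos_le_inner hγs hγt (angle_nonneg _ _) (angle_le_pi _ _)
    (angle_le_pi _ _) hangle

variable [FiniteDimensional ℝ E] (hp_arclength : IsArclengthParam p L)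
  (hγ_arclength : IsArclengthParam γ L)
include hp_arclength hγ_arclength

theorem inner_sub_le_inner_sub_of_lt (hT : ‖T‖ ≤ 1) (hs : s ∈ Ioo 0 t₀) (hps : ‖deriv p s‖ = 1)
    (hγs : ‖deriv γ s‖ = 1)
    (hTs : Real.cos (angle (p L - p 0) (deriv p s)) ≤ ⟪T, deriv γ s⟫) :
    ⟪‖p L - p 0‖⁻¹ • (p L - p 0), p s - p 0⟫ ≤ ⟪T, γ s - γ 0⟫ := by
  have : FiniteDimensional ℝ F := .of_fact_finrank_eq_two
  have hsub : Icc 0 s ⊆ Icc 0 L := Icc_subset_Icc_right (hs.2.trans ht₀.2).le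
  refine inner_sub_le_inner_sub_of_ae_inner_deriv_le hs.1.le
    (hp_arclength.lipschitzOnWith.mono hsub) (hγ_arclength.lipschitzOnWith.mono hsub) ?_
  filter_upwards [hp_arclength.ae_norm_deriv_eq_one, hγ_arclength.ae_norm_deriv_eq_one]
    with r hpr hγr hr
  have hrL : r ∈ Ioo 0 L := ⟨hr.1, hr.2.trans (hs.2.trans ht₀.2)⟩
  rw [inner_inv_norm_smul_eq_cos_angle (hpr hrL)]
  exact hp.cos_angle_le_inner_of_lt ht₀ hmin hcomp hT hs hps hγs hTs hr (hpr hrL) (hγr hrL)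

theorem inner_sub_le_inner_sub_of_gt (hT : ‖T‖ ≤ 1) (ht : t ∈ Ioo t₀ L) (hpt : ‖deriv p t‖ = 1)
    (hγt : ‖deriv γ t‖ = 1)
    (hTt : Real.cos (angle (p L - p 0) (deriv p t)) ≤ ⟪T, deriv γ t⟫) :
    ⟪‖p L - p 0‖⁻¹ • (p L - p 0), p L - p t⟫ ≤ ⟪T, γ L - γ t⟫ := by
  have : FiniteDimensional ℝ F := .of_fact_finrank_eq_two
  have hsub : Icc t L ⊆ Icc 0 L := Icc_subset_Icc_left (ht₀.1.trans ht.1).le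
  refine inner_sub_le_inner_sub_of_ae_inner_deriv_le ht.2.le
    (hp_arclength.lipschitzOnWith.mono hsub) (hγ_arclength.lipschitzOnWith.mono hsub) ?_
  filter_upwards [hp_arclength.ae_norm_deriv_eq_one, hγ_arclength.ae_norm_deriv_eq_one]
    with r hpr hγr hr
  have hrL : r ∈ Ioo 0 L := ⟨(ht₀.1.trans ht.1).trans hr.1, hr.2⟩
  rw [inner_inv_norm_smul_eq_cos_angle (hpr hrL)]
  exact hp.cos_angle_le_inner_of_gt ht₀ hmin hcomp hT ht hpt hγt hTt hr (hpr hrL) (hγr hrL)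

theorem norm_chord_le_add (hs : s ∈ Ioo 0 t₀) (hps : ‖deriv p s‖ = 1) (hγs : ‖deriv γ s‖ = 1)
    (ht : t ∈ Ioo t₀ L) (hpt : ‖deriv p t‖ = 1) (hγt : ‖deriv γ t‖ = 1) :
    ‖p L - p 0‖ ≤ ‖γ L - γ 0‖ + 2 * (t - s) := by
  obtain ⟨T, hT, hTs, hTt⟩ := hp.exists_cos_angle_le_inner ht₀ hmin hcomp hs hps hγs ht hpt hγt
  have hleft := hp.inner_sub_le_inner_sub_of_lt ht₀ hmin hcomp hp_arclength hγ_arclength hT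
    hs hps hγs hTs
  have hright := hp.inner_sub_le_inner_sub_of_gt ht₀ hmin hcomp hp_arclength hγ_arclength hT
    ht hpt hγt hTt
  have hst : s ≤ t := (hs.2.trans ht.1).le
  have hsL : s ∈ Icc 0 L := ⟨hs.1.le, (hs.2.trans ht₀.2).le⟩
  have htL : t ∈ Icc 0 L := ⟨(ht₀.1.trans ht.1).le, ht.2.le⟩
  set e : F := ‖p L - p 0‖⁻¹ • (p L - p 0)
  have hmid_p : ⟪e, p t - p s⟫ ≤ t - s :=
    inner_le_of_norm_le_one (norm_inv_norm_smul_le_one _) (hp_arclength.norm_sub_le hsL htL hst)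
  have hmid_γ : ⟪-T, γ t - γ s⟫ ≤ t - s :=
    inner_le_of_norm_le_one ((norm_neg T).trans_le hT) (hγ_arclength.norm_sub_le hsL htL hst)
  calc ‖p L - p 0‖
    _ = ⟪e, p L - p 0⟫ := (inner_inv_norm_smul_self _).symm
    _ = ⟪e, p s - p 0⟫ + ⟪e, p t - p s⟫ + ⟪e, p L - p t⟫ := by
      simp only [inner_sub_right]
      ring
    _ ≤ ⟪T, γ s - γ 0⟫ + (t - s) + ⟪T, γ L - γ t⟫ := add_le_add (add_le_add hleft hmid_p) hright
    _ = ⟪T, γ L - γ 0⟫ + ⟪-T, γ t - γ s⟫ + (t - s) := by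
      simp only [inner_sub_right, inner_neg_left]
      ring
    _ ≤ ‖γ L - γ 0‖ + (t - s) + (t - s) := by
      gcongr
      exact inner_le_of_norm_le_one hT le_rfl
    _ = ‖γ L - γ 0‖ + 2 * (t - s) := by ring

end Minimizer

theorem norm_sub_le_norm_sub [FiniteDimensional ℝ E] (hp : IsConvexArc o p L) (hL : 0 < L)
    (hp_arclength : IsArclengthParam p L) (hγ_arclength : IsArclengthParam γ L)
    (hcomp : ∀ a b, 0 ≤ a → a ≤ b → b ≤ L → arcTC γ a b ≤ arcTC p a b) :
    ‖p L - p 0‖ ≤ ‖γ L - γ 0‖ := by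
  have : FiniteDimensional ℝ F := .of_fact_finrank_eq_two
  obtain ⟨t₀, ht₀, hmin⟩ := hp.exists_isMinOn_chordHeight hL
  have hdense := Measure.dense_of_ae
    (hp_arclength.ae_norm_deriv_eq_one.and hγ_arclength.ae_norm_deriv_eq_one)
  refine le_of_forall_pos_le_add fun ε hε => ?_
  obtain ⟨s, hs, hs_lt, hst₀⟩ := hdense.exists_between
    (show max 0 (t₀ - ε / 4) < t₀ from max_lt ht₀.1 (by linarith))
  obtain ⟨t, ht, htt₀, ht_lt⟩ := hdense.exists_between
    (show t₀ < min L (t₀ + ε / 4) from lt_min ht₀.2 (by linarith))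
  obtain ⟨h0s, hεs⟩ := max_lt_iff.1 hs_lt
  obtain ⟨htL, htε⟩ := lt_min_iff.1 ht_lt
  have hsL : s ∈ Ioo 0 L := ⟨h0s, hst₀.trans ht₀.2⟩
  have htL' : t ∈ Ioo 0 L := ⟨ht₀.1.trans htt₀, htL⟩
  have hle := hp.norm_chord_le_add ht₀ hmin hcomp hp_arclength hγ_arclength ⟨h0s, hst₀⟩
    (hs.1 hsL) (hs.2 hsL) ⟨htt₀, htL⟩ (ht.1 htL') (ht.2 htL')
  linarith

end IsConvexArc

theorem schur_comparison_general [FiniteDimensional ℝ E] {C : Set F} (hL : 0 ≤ L)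
    (hinj : InjOn p (Icc 0 L)) (hp : IsArclengthParam p L) (hγ : IsArclengthParam γ L)
    (hclosed : IsClosed C) (hconvex : Convex ℝ C) (hfrontier : MapsTo p (Icc 0 L) (frontier C))
    (hcomp : ∀ a b, 0 ≤ a → a ≤ b → b ≤ L → arcTC γ a b ≤ arcTC p a b) :
    ‖p L - p 0‖ ≤ ‖γ L - γ 0‖ := by
  rcases hL.eq_or_lt with rfl | hL
  · rw [sub_self, sub_self, norm_zero, norm_zero]
  have : FiniteDimensional ℝ F := .of_fact_finrank_eq_two
  rcases isConvexArc_or_neg_of_mapsTo_frontier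
    (Module.finBasisOfFinrankEq ℝ F Fact.out).orientation hconvex hclosed
    hp.lipschitzOnWith.continuousOn hinj hfrontier with h | h
  exacts [h.norm_sub_le_norm_sub hL hp hγ hcomp, h.norm_sub_le_norm_sub hL hp hγ hcomp]

end Comparison

/-- Schur's comparison theorem: let `γb : [0,L] → ℝ²` be an injective arc
parametrized by arclength such that its image together with the segment joining its
endpoints is the frontier of a compact convex set, and let `γ : [0,L] → ℝᵈ` be an arc
parametrized by arclength with nowhere more curvature than `γb`.  Then the endpoints of
`γ` are at least as far apart as those of `γb`. -/
theorem schur_comparison (d : ℕ) (L : ℝ) (hL : 0 ≤ L)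
    (γb : ℝ → EuclideanSpace ℝ (Fin 2)) (γ : ℝ → EuclideanSpace ℝ (Fin d))
    (hγbc : ContinuousOn γb (Set.Icc 0 L)) (hγc : ContinuousOn γ (Set.Icc 0 L))
    (hinj : Set.InjOn γb (Set.Icc 0 L))
    (harcb : ∀ a b : ℝ, 0 ≤ a → a ≤ b → b ≤ L → arcLen γb a b = ENNReal.ofReal (b - a))
    (harc : ∀ a b : ℝ, 0 ≤ a → a ≤ b → b ≤ L → arcLen γ a b = ENNReal.ofReal (b - a))
    (hconv : ∃ C : Set (EuclideanSpace ℝ (Fin 2)), IsCompact C ∧ Convex ℝ C ∧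
      frontier C = γb '' Set.Icc 0 L ∪ segment ℝ (γb L) (γb 0))
    (hcomp : ∀ a b : ℝ, 0 ≤ a → a ≤ b → b ≤ L → arcTC γ a b ≤ arcTC γb a b) :
    ‖γb L - γb 0‖ ≤ ‖γ L - γ 0‖ := by
  have : Fact (Module.finrank ℝ (EuclideanSpace ℝ (Fin 2)) = 2) := ⟨finrank_euclideanSpace_fin⟩
  obtain ⟨C, hcompact, hconvex, hfr⟩ := hconv
  exact schur_comparison_general hL hinj harcb harc hcompact.isClosed hconvex
    (fun t ht => hfr ▸ Or.inl (mem_image_of_mem γb ht)) hcomp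
end

section
/- (Chakerian's packing theorem) Let γ be a continuous curve in ℝ^d whose image is contained in the closed unit ball. If γ is an arc, then Len(γ) ≤ 2 + TC*(γ); if γ is a closed curve (loop), then Len(γ) ≤ TC*(γ). Here TC* denotes the euclidean total curvature. -/
open Set Filter MeasureTheory
open scoped ENNReal NNReal RealInnerProductSpace

/-!
Write `uᵢ = (vᵢ₊₁ - vᵢ)/‖vᵢ₊₁ - vᵢ‖`, so that an edge of a polygon has length
`⟪vᵢ₊₁ - vᵢ, uᵢ⟫ = ⟪vᵢ₊₁ - c, uᵢ⟫ - ⟪vᵢ - c, uᵢ⟫`, where `c` is the centre of the ball and `r`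
its radius. Summation by parts turns the length of the polygon into the boundary term
`⟪vₙ - c, uₙ₋₁⟫ - ⟪v₀ - c, u₀⟫` minus the sum of the `⟪vᵢ - c, uᵢ - uᵢ₋₁⟫`, each at most
`r ‖uᵢ - uᵢ₋₁‖` in absolute value. For an arc the boundary term is at most `2 r`. A closed polygon
is traversed once and then along its first edge again: the boundary term becomes the length of
that edge, which cancels the length added by repeating it.
-/

open NormedSpace (normalize)
open Metric (closedBall)

section Collapse

variable {α : Type*}

lemma collapse_cons_self (a : α) (l : List α) : collapse (a :: a :: l) = collapse (a :: l) := by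
  simp [collapse, List.destutter_cons']

lemma collapse_cons_cons_of_ne {a b : α} (h : a ≠ b) (l : List α) :
    collapse (a :: b :: l) = a :: collapse (b :: l) := by
  simp [collapse, List.destutter_cons', h]

lemma collapse_sublist (l : List α) : (collapse l).Sublist l :=
  letI := Classical.decRel fun x y : α => x ≠ y
  l.destutter_sublist (· ≠ ·)

lemma head?_collapse : ∀ l : List α, (collapse l).head? = l.head?
  | [] | [_] => rfl
  | a :: b :: l => by
    obtain rfl | hab := eq_or_ne a b
    · rw [collapse_cons_self, head?_collapse, List.head?_cons, List.head?_cons]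
    · simp only [collapse_cons_cons_of_ne hab, List.head?_cons]

lemma cyclicCollapse_sublist (l : List α) : (cyclicCollapse l).Sublist l := by
  unfold cyclicCollapse
  split_ifs
  · exact (List.dropLast_sublist _).trans (collapse_sublist l)
  · exact collapse_sublist l

end Collapse

section Length

variable {E : Type*} [NormedAddCommGroup E]

lemma lenList_append_pair (l : List E) (x y : E) :
    lenList (l ++ [x, y]) = lenList (l ++ [x]) + ‖y - x‖ := by
  induction l with
  | nil => simp [lenList]
  | cons a t ih =>
    cases t with
    | nil => simp [lenList]
    | cons b t =>
      simp only [List.cons_append, lenList] at ih ⊢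
      rw [ih, add_assoc]

lemma lenList_collapse_append (s : List E) :
    ∀ l : List E, lenList (collapse l ++ s) = lenList (l ++ s)
  | [] | [_] => rfl
  | a :: b :: l => by
    have ih := lenList_collapse_append s (b :: l)
    obtain rfl | hab := eq_or_ne a b
    · simpa [collapse_cons_self, lenList] using ih
    · obtain ⟨t, ht⟩ := List.head?_eq_some_iff.1 (head?_collapse (b :: l))
      rw [collapse_cons_cons_of_ne hab, ht]
      simpa [ht, lenList] using ih

lemma lenList_cyclicCollapse_append_take_one (l : List E) :
    lenList (cyclicCollapse l ++ (cyclicCollapse l).take 1) = lenList (l ++ l.take 1) := by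
  have hl : lenList (collapse l ++ (collapse l).take 1) = lenList (l ++ l.take 1) := by
    rw [lenList_collapse_append, List.take_one, List.take_one, head?_collapse]
  rw [← hl]
  unfold cyclicCollapse
  split_ifs with h
  · obtain ⟨hlen, hwrap⟩ := h
    generalize collapse l = m at hlen hwrap
    match m with
    | a :: b :: t =>
      obtain ⟨q, hq⟩ := List.getLast?_eq_some_iff.1 (hwrap.trans List.head?_cons)
      match q with
      | a' :: q =>
        obtain rfl : a = a' := (List.cons.inj hq).1
        rw [hq, List.dropLast_concat]
        simpa [lenList] using (lenList_append_pair (a :: q) a a).symm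
  · rfl

lemma polyLen_eq_lenList (γ : ℝ → E) (m : ℕ) (u : ℕ → ℝ) :
    polyLen γ m u = lenList (vertexList γ m u) := by
  unfold polyLen vertexList
  induction m with
  | zero => simp [lenList]
  | succ m ih =>
    rw [Finset.sum_range_succ, ih]
    simp [List.range_succ, lenList_append_pair]

end Length

section Polygon

variable {E : Type*} [NormedAddCommGroup E] [InnerProductSpace ℝ E]

lemma norm_normalize_le_one (x : E) : ‖normalize x‖ ≤ 1 := by
  obtain rfl | hx := eq_or_ne x 0
  · simp
  · exact (NormedSpace.norm_normalize hx).le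

lemma inner_self_normalize (x : E) : inner ℝ x (normalize x) = ‖x‖ := by
  obtain rfl | hx := eq_or_ne x 0
  · simp
  · rw [NormedSpace.normalize, inner_smul_right, real_inner_self_eq_norm_mul_norm,
      inv_mul_cancel_left₀ (norm_ne_zero_iff.2 hx)]

lemma norm_sub_eq_inner_sub_inner (a b c : E) :
    ‖b - a‖ = inner ℝ (b - c) (normalize (b - a)) - inner ℝ (a - c) (normalize (b - a)) := by
  rw [← inner_sub_left, sub_sub_sub_cancel_right, inner_self_normalize]

lemma abs_inner_sub_le_of_mem_closedBall {b c : E} {r : ℝ} (hb : b ∈ closedBall c r) (v : E) :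
    |inner ℝ (b - c) v| ≤ r * ‖v‖ :=
  (abs_real_inner_le_norm _ _).trans <| by
    gcongr
    exact mem_closedBall_iff_norm.1 hb

variable {c : E} {r : ℝ} {l : List E}

lemma lenList_add_inner_le {a b y z : E} (hl : ∀ x ∈ l, x ∈ closedBall c r)
    (hab : [a, b] <+: l) (hyz : [y, z] <:+ l) :
    lenList l + inner ℝ (a - c) (normalize (b - a)) ≤
      inner ℝ (z - c) (normalize (z - y)) + r * starSum l := by
  obtain ⟨t, rfl⟩ := hab
  simp only [List.cons_append, List.nil_append] at hl hyz ⊢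
  have hedge := norm_sub_eq_inner_sub_inner a b c
  induction t generalizing a b with
  | nil =>
    obtain ⟨rfl, rfl⟩ : y = a ∧ z = b := by simpa using hyz.eq_of_length rfl
    simp only [lenList, starSum]
    linarith
  | cons d t ih =>
    have hyz' : [y, z] <:+ b :: d :: t := by simpa [List.suffix_cons_iff] using hyz
    have hrest := ih (fun x hx => hl x (List.mem_cons_of_mem a hx)) hyz'
      (norm_sub_eq_inner_sub_inner b d c)
    have hturn : -(r * ‖normalize (d - b) - normalize (b - a)‖) ≤
        inner ℝ (b - c) (normalize (d - b) - normalize (b - a)) :=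
      (abs_le.1 <| abs_inner_sub_le_of_mem_closedBall (hl b (by simp)) _).1
    rw [inner_sub_right] at hturn
    calc lenList (a :: b :: d :: t) + inner ℝ (a - c) (normalize (b - a))
        = inner ℝ (b - c) (normalize (b - a)) + lenList (b :: d :: t) := by
          rw [lenList, hedge]; ring
      _ ≤ inner ℝ (z - c) (normalize (z - y)) + r *
          (‖normalize (d - b) - normalize (b - a)‖ + starSum (b :: d :: t)) := by linarith

theorem lenList_le_mul_two_add_starSum (hr : 0 ≤ r) (hl : ∀ x ∈ l, x ∈ closedBall c r) :
    lenList l ≤ r * (2 + starSum l) := by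
  match l with
  | [] | [_] => simpa [lenList, starSum] using hr
  | a :: b :: t =>
    obtain ⟨y, z, hyz⟩ : ∃ y z, (a :: b :: t).drop t.length = [y, z] :=
      List.length_eq_two.1 (by grind)
    have hsuffix : [y, z] <:+ a :: b :: t := hyz ▸ List.drop_suffix _ _
    have hmain := lenList_add_inner_le hl (List.prefix_append [a, b] t) hsuffix
    have hboundary {p : E} (hp : p ∈ a :: b :: t) (q : E) :
        |inner ℝ (p - c) (normalize q)| ≤ r :=
      (abs_inner_sub_le_of_mem_closedBall (hl p hp) _).trans
        (mul_le_of_le_one_right hr (norm_normalize_le_one q))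
    have hfirst := (abs_le.1 <| hboundary (p := a) (by simp) (b - a)).1
    have hlast := (abs_le.1 <| hboundary (hsuffix.subset (by simp : z ∈ [y, z])) (z - y)).2
    linarith

theorem lenList_append_take_one_le_mul_starSum (hl : ∀ x ∈ l, x ∈ closedBall c r) :
    lenList (l ++ l.take 1) ≤ r * starSum (l ++ l.take 2) := by
  match l with
  | [] | [_] => simp [lenList, starSum]
  | a :: b :: t =>
    have hl' : ∀ x ∈ a :: b :: t ++ [a, b], x ∈ closedBall c r := by
      grind
    have hmain := lenList_add_inner_le hl' (List.prefix_append [a, b] (t ++ [a, b]))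
      (List.suffix_append (a :: b :: t) [a, b])
    rw [lenList_append_pair] at hmain
    have hedge := norm_sub_eq_inner_sub_inner a b c
    simp only [List.take_succ_cons, List.take_zero]
    linarith

end Polygon

section Curve

variable {E : Type*} [NormedAddCommGroup E] [InnerProductSpace ℝ E] {c : E} {r : ℝ}

lemma polyLen_le_mul_two_add_polyTCStar {γ : ℝ → E} {m : ℕ} {u : ℕ → ℝ}
    (hγ : ∀ i ≤ m, γ (u i) ∈ closedBall c r) : polyLen γ m u ≤ r * (2 + polyTCStar γ m u) := by
  have hr : 0 ≤ r := Metric.nonempty_closedBall.1 ⟨_, hγ 0 m.zero_le⟩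
  have hball : ∀ x ∈ vertexList γ m u, x ∈ closedBall c r := by
    simpa [vertexList, Nat.lt_succ_iff] using hγ
  rw [polyLen_eq_lenList, ← List.append_nil (vertexList γ m u), ← lenList_collapse_append,
    List.append_nil]
  exact lenList_le_mul_two_add_starSum hr fun x hx => hball x ((collapse_sublist _).subset hx)

lemma loopPolyLen_le_mul_loopPolyTCStar {γ : AddCircle (1 : ℝ) → E} {m : ℕ} {u : ℕ → ℝ}
    (hγ : ∀ i ≤ m, γ (u i) ∈ closedBall c r) :
    loopPolyLen γ m u ≤ r * loopPolyTCStar γ m u := by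
  have hball : ∀ x ∈ loopVertexList γ m u, x ∈ closedBall c r := by
    simpa [loopVertexList, Nat.lt_succ_iff] using hγ
  rw [loopPolyLen, ← lenList_cyclicCollapse_append_take_one]
  exact lenList_append_take_one_le_mul_starSum fun x hx =>
    hball x ((cyclicCollapse_sublist _).subset hx)

lemma ofReal_polyTCStar_le_arcTCStar (γ : ℝ → E) {a b : ℝ} {m : ℕ} {u : ℕ → ℝ}
    (hu : InscribedIn a b m u) : ENNReal.ofReal (polyTCStar γ m u) ≤ arcTCStar γ a b :=
  le_iSup_of_le m <| le_iSup₂_of_le u hu le_rfl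

lemma ofReal_loopPolyTCStar_le_loopTCStar (γ : AddCircle (1 : ℝ) → E) {m : ℕ} {u : ℕ → ℝ}
    (hu : LoopInscribed m u) : ENNReal.ofReal (loopPolyTCStar γ m u) ≤ loopTCStar γ :=
  le_iSup_of_le m <| le_iSup₂_of_le u hu le_rfl

theorem arcLen_le_mul_two_add_arcTCStar {γ : ℝ → E} {a b : ℝ}
    (hγ : ∀ t ∈ Icc a b, γ t ∈ closedBall c r) :
    arcLen γ a b ≤ ENNReal.ofReal r * (2 + arcTCStar γ a b) := by
  refine iSup_le fun m => iSup₂_le fun u hu => ?_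
  have hball : ∀ i ≤ m, γ (u i) ∈ closedBall c r := fun i hi => hγ _ (hu.2 i hi)
  have hr : 0 ≤ r := Metric.nonempty_closedBall.1 ⟨_, hball 0 m.zero_le⟩
  calc ENNReal.ofReal (polyLen γ m u)
      ≤ ENNReal.ofReal (r * (2 + polyTCStar γ m u)) :=
        ENNReal.ofReal_le_ofReal (polyLen_le_mul_two_add_polyTCStar hball)
    _ = ENNReal.ofReal r * ENNReal.ofReal (2 + polyTCStar γ m u) := ENNReal.ofReal_mul hr
    _ ≤ ENNReal.ofReal r * (2 + arcTCStar γ a b) := by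
        grw [ENNReal.ofReal_add_le, ENNReal.ofReal_ofNat, ofReal_polyTCStar_le_arcTCStar γ hu]

theorem loopLen_le_mul_loopTCStar {γ : AddCircle (1 : ℝ) → E}
    (hγ : ∀ t, γ t ∈ closedBall c r) : loopLen γ ≤ ENNReal.ofReal r * loopTCStar γ := by
  have hr : 0 ≤ r := Metric.nonempty_closedBall.1 ⟨_, hγ 0⟩
  refine iSup_le fun m => iSup₂_le fun u hu => ?_
  calc ENNReal.ofReal (loopPolyLen γ m u)
      ≤ ENNReal.ofReal (r * loopPolyTCStar γ m u) :=
        ENNReal.ofReal_le_ofReal <| loopPolyLen_le_mul_loopPolyTCStar fun i _ => hγ (u i)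
    _ = ENNReal.ofReal r * ENNReal.ofReal (loopPolyTCStar γ m u) := ENNReal.ofReal_mul hr
    _ ≤ ENNReal.ofReal r * loopTCStar γ := by
        grw [ofReal_loopPolyTCStar_le_loopTCStar γ hu]

theorem chakerian_packing_general (c : E) (r : ℝ) :
    (∀ (γ : ℝ → E) (a b : ℝ), (∀ t ∈ Icc a b, γ t ∈ closedBall c r) →
      arcLen γ a b ≤ ENNReal.ofReal r * (2 + arcTCStar γ a b)) ∧
    (∀ γ : AddCircle (1 : ℝ) → E, (∀ t, γ t ∈ closedBall c r) →
      loopLen γ ≤ ENNReal.ofReal r * loopTCStar γ) :=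
  ⟨fun _ _ _ => arcLen_le_mul_two_add_arcTCStar, fun _ => loopLen_le_mul_loopTCStar⟩

end Curve

/-- Chakerian's packing theorem: a continuous curve in the closed unit
ball of `ℝᵈ` satisfies `Len γ ≤ 2 + TC* γ` if it is an arc, and `Len γ ≤ TC* γ` if it is
a closed curve. -/
theorem chakerian_packing (d : ℕ) :
    (∀ γ : ℝ → EuclideanSpace ℝ (Fin d), ContinuousOn γ (Set.Icc 0 1) →
      (∀ t ∈ Set.Icc (0 : ℝ) 1, ‖γ t‖ ≤ 1) →
      arcLen γ 0 1 ≤ 2 + arcTCStar γ 0 1) ∧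
    (∀ γ : AddCircle (1 : ℝ) → EuclideanSpace ℝ (Fin d), Continuous γ →
      (∀ t, ‖γ t‖ ≤ 1) →
      loopLen γ ≤ loopTCStar γ) := by
  obtain ⟨harc, hloop⟩ := chakerian_packing_general (0 : EuclideanSpace ℝ (Fin d)) 1
  exact ⟨fun γ _ hγ => by simpa using harc γ 0 1 (by simpa using hγ),
    fun γ _ hγ => by simpa using hloop γ (by simpa using hγ)⟩
end

section
/- (Lower semicontinuity of distortion) Let γ_j, γ : [0,1] → ℝ^d be continuous arcs such that the Fréchet distance d_F(γ_j, γ) → 0 as j → ∞. Then δ(γ) ≤ liminf_{j→∞} δ(γ_j), where δ denotes distortion. -/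
/-!
Distortion does not increase under monotone reparametrisation, so curves Fréchet-close to `γ` may be
replaced by curves uniformly close to `γ`. For these the claim holds even under pointwise
convergence: length is the variation on an interval, which is lower semicontinuous, and
the chord lengths in the denominators converge.
-/

open Set Filter MeasureTheory
open scoped ENNReal NNReal RealInnerProductSpace

/-- The (Gromov) distortion of the arc `γ : [0,1] → E`: the supremum of
`Len(γ|[s,t]) / ‖γ t - γ s‖` over `0 ≤ s < t ≤ 1` with `γ s ≠ γ t`, valued in `[0,∞]`. -/
noncomputable def disto {E : Type*} [NormedAddCommGroup E] (γ : ℝ → E) : ℝ≥0∞ :=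
  ⨆ (s : ℝ) (t : ℝ) (_ : 0 ≤ s ∧ s < t ∧ t ≤ 1 ∧ γ s ≠ γ t),
    arcLen γ s t / ENNReal.ofReal ‖γ t - γ s‖

section Distortion

open scoped Topology

variable {ι E : Type*} [NormedAddCommGroup E] {l : Filter ι} {γ : ℝ → E} {a b : ℝ}

theorem monotoneOn_of_rightInvOn {α β : Type*} [LinearOrder α] [PartialOrder β] {f : α → β}
    {g : β → α} {s : Set α} {t : Set β} (hf : MonotoneOn f s) (hg : MapsTo g t s)
    (hinv : RightInvOn g f t) : MonotoneOn g t := by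
  intro x hx y hy hxy
  by_contra! hlt
  have hyx : y ≤ x := by simpa only [hinv hx, hinv hy] using hf (hg hy) (hg hx) hlt.le
  exact hlt.ne (congrArg g (hyx.antisymm hxy))

theorem ennreal_div_le_liminf_div {u v : ι → ℝ≥0∞} {x y : ℝ≥0∞} (hu : x ≤ liminf u l)
    (hv : Tendsto v l (𝓝 y)) : x / y ≤ liminf (fun i => u i / v i) l := by
  have hv' : y⁻¹ ≤ liminf v⁻¹ l :=
    (le_liminf_iff).2 fun _ hc => hv.inv.eventually_const_lt hc
  simp only [div_eq_mul_inv]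
  exact (mul_le_mul' hu hv').trans ENNReal.le_liminf_mul

theorem inscribedIn_iff_strictMonoOn {m : ℕ} {u : ℕ → ℝ} :
    InscribedIn a b m u ↔ StrictMonoOn u (Iic m) ∧ ∀ i ∈ Iic m, u i ∈ Icc a b :=
  and_congr_left' ⟨fun h => strictMonoOn_of_lt_succ ordConnected_Iic fun i _ _ hi => h i hi,
    fun h i hi => h hi.le hi i.lt_succ_self⟩

theorem ofReal_polyLen (γ : ℝ → E) (m : ℕ) (u : ℕ → ℝ) :
    ENNReal.ofReal (polyLen γ m u) = ∑ i ∈ Finset.range m, edist (γ (u (i + 1))) (γ (u i)) := by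
  simp only [polyLen, ENNReal.ofReal_sum_of_nonneg fun _ _ => norm_nonneg _, edist_dist,
    dist_eq_norm]

theorem arcLen_eq_eVariationOn (γ : ℝ → E) (a b : ℝ) :
    arcLen γ a b = eVariationOn γ (Icc a b) := by
  simp only [arcLen, inscribedIn_iff_strictMonoOn, ofReal_polyLen,
    eVariationOn.eVariationOn_eq_strictMonoOn, iSup_sigma, iSup_subtype]

theorem arcLen_comp_le {g : ℝ → ℝ} (hg : MonotoneOn g (Icc a b)) :
    arcLen (γ ∘ g) a b ≤ arcLen γ (g a) (g b) := by
  simpa only [arcLen_eq_eVariationOn] using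
    eVariationOn.comp_le_of_monotoneOn γ g hg hg.mapsTo_Icc

theorem arcLen_le_liminf {F : ι → ℝ → E}
    (hF : ∀ t ∈ Icc a b, Tendsto (fun i => F i t) l (𝓝 (γ t))) :
    arcLen γ a b ≤ liminf (fun i => arcLen (F i) a b) l := by
  simp only [arcLen_eq_eVariationOn]
  exact (le_liminf_iff).2 fun _ => eVariationOn.lowerSemicontinuous_aux hF

theorem arcLen_div_le_disto {s t : ℝ} (hs : s ∈ Icc 0 1) (ht : t ∈ Icc 0 1) (hst : s ≤ t)
    (hne : γ s ≠ γ t) : arcLen γ s t / ENNReal.ofReal ‖γ t - γ s‖ ≤ disto γ :=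
  le_iSup₂_of_le s t <|
    le_iSup_of_le ⟨hs.1, hst.lt_of_ne (ne_of_apply_ne γ hne), ht.2, hne⟩ le_rfl

theorem disto_le_iff {c : ℝ≥0∞} :
    disto γ ≤ c ↔ ∀ s ∈ Icc (0 : ℝ) 1, ∀ t ∈ Icc (0 : ℝ) 1, s ≤ t → γ s ≠ γ t →
      arcLen γ s t / ENNReal.ofReal ‖γ t - γ s‖ ≤ c where
  mp h _ hs _ ht hst hne := (arcLen_div_le_disto hs ht hst hne).trans h
  mpr h := iSup₂_le fun _ _ => iSup_le fun ⟨hs, hst, ht, hne⟩ =>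
    h _ ⟨hs, hst.le.trans ht⟩ _ ⟨hs.trans hst.le, ht⟩ hst.le hne

theorem disto_comp_le {g : ℝ → ℝ} (hmono : MonotoneOn g (Icc 0 1))
    (hmaps : MapsTo g (Icc 0 1) (Icc 0 1)) : disto (γ ∘ g) ≤ disto γ :=
  disto_le_iff.2 fun s hs t ht hst hne => calc
    arcLen (γ ∘ g) s t / ENNReal.ofReal ‖γ (g t) - γ (g s)‖
      ≤ arcLen γ (g s) (g t) / ENNReal.ofReal ‖γ (g t) - γ (g s)‖ := by
        gcongr
        exact arcLen_comp_le (hmono.mono (Icc_subset_Icc hs.1 ht.2))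
    _ ≤ disto γ := arcLen_div_le_disto (hmaps hs) (hmaps ht) (hmono hs ht hst) hne

theorem disto_le_liminf {F : ι → ℝ → E}
    (hF : ∀ t ∈ Icc (0 : ℝ) 1, Tendsto (fun i => F i t) l (𝓝 (γ t))) :
    disto γ ≤ liminf (fun i => disto (F i)) l := by
  refine disto_le_iff.2 fun s hs t ht hst hne => ?_
  have hlen : arcLen γ s t ≤ liminf (fun i => arcLen (F i) s t) l :=
    arcLen_le_liminf fun r hr => hF r (Icc_subset_Icc hs.1 ht.2 hr)
  have hchord : Tendsto (fun i => ENNReal.ofReal ‖F i t - F i s‖) l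
      (𝓝 (ENNReal.ofReal ‖γ t - γ s‖)) :=
    ENNReal.tendsto_ofReal ((hF t ht).sub (hF s hs)).norm
  have hne' : ∀ᶠ i in l, F i s ≠ F i t :=
    (((hF s hs).sub (hF t ht)).eventually_ne (sub_ne_zero.2 hne)).mono fun _ => sub_ne_zero.1
  refine (ennreal_div_le_liminf_div hlen hchord).trans (liminf_le_liminf ?_)
  filter_upwards [hne'] with i hi using arcLen_div_le_disto hs ht hst hi

theorem exists_pos_forall_lt_disto {c : ℝ≥0∞} (hc : c < disto γ) :
    ∃ ε > 0, ∀ β : ℝ → E, (∀ t ∈ Icc (0 : ℝ) 1, ‖β t - γ t‖ ≤ ε) → c < disto β := by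
  by_contra! H
  choose! β hclose hle using H
  have hβ : ∀ t ∈ Icc (0 : ℝ) 1, Tendsto (fun ε => β ε t) (𝓝[>] 0) (𝓝 (γ t)) := fun t ht =>
    tendsto_iff_norm_sub_tendsto_zero.2 <| squeeze_zero' (.of_forall fun _ => norm_nonneg _)
      (eventually_mem_nhdsWithin.mono fun ε hε => hclose ε hε t ht) nhdsWithin_le_nhds
  have hle' : ∀ᶠ ε in 𝓝[>] 0, disto (β ε) ≤ c := eventually_mem_nhdsWithin.mono hle
  exact hc.not_ge ((disto_le_liminf hβ).trans (liminf_le_of_frequently_le' hle'.frequently))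

/-- The parametrised curves `α` and `β` on `[0,1]` are at Fréchet distance at most `ε`, and
a reparametrisation of `β` attains the bound. Reparametrisations are monotone maps of `[0,1]` onto
itself, which are automatically continuous but may be constant on subintervals. -/
def FrechetClose (ε : ℝ) (α β : ℝ → E) : Prop :=
  ∃ h : ℝ → ℝ, MonotoneOn h (Icc 0 1) ∧ h '' Icc 0 1 = Icc 0 1 ∧
    ∀ t ∈ Icc (0 : ℝ) 1, ‖α t - β (h t)‖ ≤ ε

theorem frechetClose_of_monotoneOn {ε : ℝ} {α β : ℝ → E} {h : ℝ → ℝ}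
    (hcont : ContinuousOn h (Icc 0 1)) (hmono : MonotoneOn h (Icc 0 1)) (h0 : h 0 = 0)
    (h1 : h 1 = 1) (hclose : ∀ t ∈ Icc (0 : ℝ) 1, ‖α t - β (h t)‖ ≤ ε) : FrechetClose ε α β := by
  have himage : h '' Icc 0 1 = Icc (h 0) (h 1) := hcont.image_Icc_of_monotoneOn zero_le_one hmono
  exact ⟨h, hmono, by rwa [h0, h1] at himage, hclose⟩

theorem FrechetClose.exists_reparametrization {ε : ℝ} {α β : ℝ → E} (hαβ : FrechetClose ε α β) :
    ∃ g : ℝ → ℝ, MonotoneOn g (Icc 0 1) ∧ MapsTo g (Icc 0 1) (Icc 0 1) ∧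
      ∀ t ∈ Icc (0 : ℝ) 1, ‖α (g t) - β t‖ ≤ ε := by
  obtain ⟨h, hmono, himage, hclose⟩ := hαβ
  have hsurj : SurjOn h (Icc 0 1) (Icc 0 1) := himage.ge
  have hmaps := hsurj.mapsTo_invFunOn
  have hinv := hsurj.rightInvOn_invFunOn
  refine ⟨_, monotoneOn_of_rightInvOn hmono hmaps hinv, hmaps, fun t ht => ?_⟩
  simpa only [hinv ht] using hclose _ (hmaps ht)

theorem distortion_lower_semicontinuous_general {γj : ι → ℝ → E}
    (hfrechet : ∀ ε > 0, ∀ᶠ j in l, FrechetClose ε (γj j) γ) :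
    disto γ ≤ liminf (fun j => disto (γj j)) l := by
  refine (le_liminf_iff).2 fun c hc => ?_
  obtain ⟨ε, hε, hlt⟩ := exists_pos_forall_lt_disto hc
  filter_upwards [hfrechet ε hε] with j hj
  obtain ⟨g, hmono, hmaps, hclose⟩ := hj.exists_reparametrization
  exact (hlt (γj j ∘ g) hclose).trans_le (disto_comp_le hmono hmaps)

end Distortion

/-- lower semicontinuity of distortion: if continuous arcs `γj` converge
to `γ` in Fréchet distance, then `δ(γ) ≤ liminf δ(γj)`. -/
theorem distortion_lower_semicontinuous (d : ℕ)
    (γj : ℕ → ℝ → EuclideanSpace ℝ (Fin d)) (γ : ℝ → EuclideanSpace ℝ (Fin d))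
    (hγj : ∀ j, ContinuousOn (γj j) (Set.Icc 0 1)) (hγ : ContinuousOn γ (Set.Icc 0 1))
    (hfrechet : ∀ ε : ℝ, 0 < ε → ∃ N, ∀ j ≥ N, ∃ h : ℝ → ℝ,
      ContinuousOn h (Set.Icc 0 1) ∧ StrictMonoOn h (Set.Icc 0 1) ∧
      h 0 = 0 ∧ h 1 = 1 ∧ ∀ t ∈ Set.Icc (0 : ℝ) 1, ‖γj j t - γ (h t)‖ ≤ ε) :
    disto γ ≤ Filter.liminf (fun j => disto (γj j)) Filter.atTop := by
  refine distortion_lower_semicontinuous_general fun ε hε =>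
    eventually_atTop.2 ((hfrechet ε hε).imp fun _ hN j hj => ?_)
  obtain ⟨h, hcont, hmono, h0, h1, hclose⟩ := hN j hj
  exact frechetClose_of_monotoneOn hcont hmono.monotoneOn h0 h1 hclose
end
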